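/- arXiv:0807.3250 — 2 statements merged into one kernel-verified Lean document; each statement's English description precedes it below -/
import Mathlib

section
/- Let 𝕜 be a field and let A and B be finite-dimensional 𝕜-algebras such that every simple A-module and every simple B-module is absolutely irreducible over 𝕜 (i.e., its endomorphism algebra equals 𝕜). Then there is an isomorphism of abelian groups K₀(A) ⊗_ℤ K₀(B) ≅ K₀(A ⊗_𝕜 B) which sends [P] ⊗ [Q] to [P ⊗_𝕜 Q] for every finitely generated projective A-module P and finitely generated projective B-module Q. -/
/-!
`K₀` of a ring: the Grothendieck group of finitely generated projective modules,
and the Künneth-type isomorphism `K₀(A) ⊗_ℤ K₀(B) ≅ K₀(A ⊗_𝕜 B)` for finite-dimensional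
algebras over a field all of whose simple modules are absolutely irreducible.
-/

open TensorProduct

noncomputable section

/-- A bundled finitely generated projective (left) module over a ring `A`. -/
structure FGProj (A : Type) [Ring A] : Type 1 where
  M : Type
  [acg : AddCommGroup M]
  [mod : Module A M]
  fin : Module.Finite A M
  proj : Module.Projective A M

attribute [instance] FGProj.acg FGProj.mod

/-- Isomorphism of finitely generated projective modules. -/
def FGProjIso (A : Type) [Ring A] (P Q : FGProj A) : Prop :=
  Nonempty (P.M ≃ₗ[A] Q.M)

/-- `K₀(A)`: the free abelian group on isomorphism classes of finitely generated
projective `A`-modules, modulo the relations `[R] = [P] + [Q]` whenever `R ≅ P ⊕ Q`. -/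
def K0 (A : Type) [Ring A] : Type 1 :=
  FreeAbelianGroup (Quot (FGProjIso A)) ⧸
    AddSubgroup.closure {z | ∃ P Q R : FGProj A, Nonempty (R.M ≃ₗ[A] P.M × Q.M) ∧
      z = FreeAbelianGroup.of (Quot.mk (FGProjIso A) R) -
        FreeAbelianGroup.of (Quot.mk (FGProjIso A) P) -
        FreeAbelianGroup.of (Quot.mk (FGProjIso A) Q)}

instance (A : Type) [Ring A] : AddCommGroup (K0 A) :=
  QuotientAddGroup.Quotient.addCommGroup _

/-- The class `[P] ∈ K₀(A)` of a finitely generated projective `A`-module `P`. -/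
def K0cls {A : Type} [Ring A] (P : FGProj A) : K0 A :=
  QuotientAddGroup.mk (FreeAbelianGroup.of (Quot.mk (FGProjIso A) P))

/-!
Over an Artinian ring the classes of the projective covers of the simple modules form a `ℤ`-basis of
`K₀`: they are independent because the multiplicities of the simple modules in the head of a
projective module are dual to them, and they span because a nonzero projective module mapping onto
a simple module `S` splits off the projective cover of `S`.

If `S` is an absolutely irreducible `A`-module, the density theorem makes `S ⊗ T` simple over
`A ⊗ B` for every simple `B`-module `T`, and every simple `A ⊗ B`-module `U` arises in this way, `T`
being a simple submodule of `Hom_A(S, U)`. Contracting with linear functionals reduces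
homomorphisms `P ⊗ Q → S' ⊗ T'` to homomorphisms `P → S'` and `Q → T'`; hence if `P → S` and `Q → T`
are projective covers, so is `P ⊗ Q → S ⊗ T`. The map `[P] ⊗ [Q] ↦ [P ⊗ Q]` therefore carries a
basis to a basis.
-/

section GrothendieckGroup

variable {R : Type} [Ring R]

namespace FGProj

instance (P : FGProj R) : Module.Finite R P.M := P.fin

instance (P : FGProj R) : Module.Projective R P.M := P.proj

/-- The zero module, as a finitely generated projective module. -/
def zero (R : Type) [Ring R] : FGProj R where
  M := PUnit
  fin := inferInstance
  proj := inferInstance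

end FGProj

namespace K0

theorem cls_eq_of_equiv {P Q : FGProj R} (e : P.M ≃ₗ[R] Q.M) : K0cls P = K0cls Q :=
  congrArg (fun x => QuotientAddGroup.mk (FreeAbelianGroup.of x)) (Quot.sound ⟨e⟩)

theorem cls_eq_add {P Q L : FGProj R} (e : L.M ≃ₗ[R] P.M × Q.M) :
    K0cls L = K0cls P + K0cls Q := by
  rw [← sub_eq_zero, ← sub_sub]
  exact (QuotientAddGroup.eq_zero_iff _).2 (AddSubgroup.subset_closure ⟨P, Q, L, ⟨e⟩, rfl⟩)

theorem cls_eq_zero (P : FGProj R) [Subsingleton P.M] : K0cls P = 0 := by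
  have h : K0cls P = K0cls P + K0cls P := cls_eq_add (LinearEquiv.ofSubsingleton _ _)
  simpa using h

theorem eq_of_equiv_of_additive {G : Type*} [AddCommGroup G] {d : FGProj R → G}
    (hd : ∀ P Q L : FGProj R, Nonempty (L.M ≃ₗ[R] P.M × Q.M) → d L = d P + d Q)
    {P Q : FGProj R} (e : P.M ≃ₗ[R] Q.M) : d P = d Q := by
  have hzero : d (.zero R) = d (.zero R) + d (.zero R) :=
    hd _ _ _ ⟨(LinearEquiv.prodUnique (R := R) (M := PUnit) (M₂ := PUnit)).symm⟩
  have hP : d P = d Q + d (.zero R) :=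
    hd _ _ _ ⟨e.trans (LinearEquiv.prodUnique (R := R) (M := Q.M) (M₂ := PUnit)).symm⟩
  rw [hP, left_eq_add.1 hzero, add_zero]

/-- The universal property of `K₀`: an assignment additive on direct sums descends to `K₀`. -/
def lift {G : Type*} [AddCommGroup G] (d : FGProj R → G)
    (hd : ∀ P Q L : FGProj R, Nonempty (L.M ≃ₗ[R] P.M × Q.M) → d L = d P + d Q) :
    K0 R →+ G :=
  QuotientAddGroup.lift _
    (FreeAbelianGroup.lift (Quot.lift d fun _ _ ⟨e⟩ => eq_of_equiv_of_additive hd e)) <| by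
      rw [AddSubgroup.closure_le]
      rintro _ ⟨P, Q, L, e, rfl⟩
      simp [hd P Q L e]

@[simp]
theorem lift_cls {G : Type*} [AddCommGroup G] (d : FGProj R → G)
    (hd : ∀ P Q L : FGProj R, Nonempty (L.M ≃ₗ[R] P.M × Q.M) → d L = d P + d Q)
    (P : FGProj R) : lift d hd (K0cls P) = d P :=
  FreeAbelianGroup.lift_apply_of _ _

theorem closure_range_cls (R : Type) [Ring R] :
    AddSubgroup.closure (Set.range (K0cls : FGProj R → K0 R)) = ⊤ := by
  refine (AddSubgroup.eq_top_iff' _).2 fun x => ?_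
  obtain ⟨y, rfl⟩ := QuotientAddGroup.mk_surjective x
  induction y using FreeAbelianGroup.induction_on with
  | zero => exact zero_mem _
  | of z =>
    obtain ⟨P, rfl⟩ := Quot.exists_rep z
    exact AddSubgroup.subset_closure ⟨P, rfl⟩
  | neg z hz => exact neg_mem hz
  | add y z hy hz => exact add_mem hy hz

end K0

end GrothendieckGroup

section ProjectiveCovers

variable {R : Type*} [Ring R] {M N L S : Type*} [AddCommGroup M] [Module R M]
  [AddCommGroup N] [Module R N] [AddCommGroup L] [Module R L] [AddCommGroup S] [Module R S]

/-- An essential epimorphism: a surjection whose kernel is superfluous. A projective cover is an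
essential epimorphism with projective source. -/
structure IsEssentialEpi (π : M →ₗ[R] N) : Prop where
  surjective : Function.Surjective π
  eq_top_of_sup_ker_eq_top : ∀ X : Submodule R M, X ⊔ LinearMap.ker π = ⊤ → X = ⊤

namespace IsEssentialEpi

variable {π : M →ₗ[R] N}

theorem surjective_of_comp (hπ : IsEssentialEpi π) {g : L →ₗ[R] M}
    (hg : Function.Surjective (π ∘ₗ g)) : Function.Surjective g := by
  refine LinearMap.range_eq_top.1 (hπ.eq_top_of_sup_ker_eq_top _ ?_)
  rw [← Submodule.comap_map_eq, ← LinearMap.range_comp, LinearMap.range_eq_top.2 hg,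
    Submodule.comap_top]

theorem ker_le_ker_of_isSimpleModule (hπ : IsEssentialEpi π) [IsSimpleModule R S]
    (f : M →ₗ[R] S) : LinearMap.ker π ≤ LinearMap.ker f := by
  by_contra hle
  obtain ⟨x, -, hfx⟩ := SetLike.not_le_iff_exists.1 hle
  have hf : f ≠ 0 := fun h => hfx (by simp [h])
  have hker := LinearMap.isCoatom_ker_of_surjective (LinearMap.surjective_of_ne_zero hf)
  exact hker.1 (hπ.eq_top_of_sup_ker_eq_top _
    (hker.2 _ (lt_of_le_of_ne le_sup_left fun h => hle (le_sup_right.trans h.ge))))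

theorem of_forall_ker_le_coatom [Module.Finite R M] (hπ : Function.Surjective π)
    (h : ∀ m : Submodule R M, IsCoatom m → LinearMap.ker π ≤ m) : IsEssentialEpi π where
  surjective := hπ
  eq_top_of_sup_ker_eq_top X hX := by
    by_contra hne
    obtain ⟨m, hm, hXm⟩ := (eq_top_or_exists_le_coatom X).resolve_left hne
    exact hm.1 (top_le_iff.1 (hX.ge.trans (sup_le hXm (h m hm))))

end IsEssentialEpi

theorem exists_equiv_ker_prod [Module.Projective R N] (g : M →ₗ[R] N)
    (hg : Function.Surjective g) : Nonempty (M ≃ₗ[R] LinearMap.ker g × N) := by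
  obtain ⟨l, hl⟩ := Module.projective_lifting_property g LinearMap.id hg
  exact ⟨((LinearMap.exact_subtype_ker_map g).splitSurjectiveEquiv
    (Submodule.subtype_injective _) ⟨l, hl⟩).1⟩

/-- Fitting's lemma makes the eventual image of an endomorphism a direct summand. -/
theorem exists_projective_range_pow [IsArtinian R M] [IsNoetherian R M] [Module.Projective R M]
    (g : Module.End R M) : ∃ n ≠ 0, Module.Projective R (LinearMap.range (g ^ n)) := by
  obtain ⟨n, hn, hcompl⟩ := ((Filter.eventually_ne_atTop 0).and
    (LinearMap.eventually_isCompl_ker_pow_range_pow g)).exists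
  exact ⟨n, hn, .of_split (Submodule.subtype _) (Submodule.projectionOnto _ _ hcompl.symm)
    (by ext; simp)⟩

/-- Lifting `π` through a proper submodule `X` with `X + ker π = M` gives an endomorphism `g` with
`π ∘ g = π` and image in `X`; its eventual image is the smaller projective. -/
theorem exists_projective_submodule_lt_top [IsArtinian R M] [IsNoetherian R M]
    [Module.Projective R M] {π : M →ₗ[R] N} (hπ : Function.Surjective π)
    (hess : ¬ IsEssentialEpi π) :
    ∃ Q < (⊤ : Submodule R M), Module.Projective R Q ∧ Function.Surjective (π.domRestrict Q) := by
  obtain ⟨X, hX, hXtop⟩ : ∃ X : Submodule R M, X ⊔ LinearMap.ker π = ⊤ ∧ X ≠ ⊤ := by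
    by_contra! h
    exact hess ⟨hπ, h⟩
  have hπX : Function.Surjective (π ∘ₗ X.subtype) := by
    have hmap := congrArg (Submodule.map π) hX
    rwa [Submodule.map_sup, LinearMap.le_ker_iff_map.1 le_rfl, sup_bot_eq, Submodule.map_top,
      LinearMap.range_eq_top.2 hπ, ← X.range_subtype, ← LinearMap.range_comp,
      LinearMap.range_eq_top] at hmap
  obtain ⟨f, hf⟩ := Module.projective_lifting_property (π ∘ₗ X.subtype) π hπX
  let g : Module.End R M := X.subtype ∘ₗ f
  have hπg : ∀ (n : ℕ) x, π ((g ^ n) x) = π x := by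
    intro n
    induction n with
    | zero => simp
    | succ n ih => exact fun x => (ih (g x)).trans (LinearMap.congr_fun hf x)
  obtain ⟨n, hn, hproj⟩ := exists_projective_range_pow g
  refine ⟨LinearMap.range (g ^ n), ?_, hproj, fun y => ?_⟩
  · obtain ⟨m, rfl⟩ := Nat.exists_eq_succ_of_ne_zero hn
    refine lt_of_le_of_lt ?_ hXtop.lt_top
    rintro _ ⟨x, rfl⟩
    rw [Nat.succ_eq_add_one, pow_succ']
    exact (f _).2
  · obtain ⟨x, rfl⟩ := hπ y
    exact ⟨⟨_, x, rfl⟩, hπg n x⟩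

theorem exists_projectiveCover (R : Type) [Ring R] [IsArtinianRing R] (M : Type*) [AddCommGroup M]
    [Module R M] [Module.Finite R M] :
    ∃ (P : FGProj R) (π : P.M →ₗ[R] M), IsEssentialEpi π := by
  let covers : Set (FGProj R) := {P | ∃ π : P.M →ₗ[R] M, Function.Surjective π}
  have hcovers : covers.Nonempty := by
    obtain ⟨n, π, hπ⟩ := Module.Finite.exists_fin' R M
    exact ⟨⟨Fin n → R, inferInstance, inferInstance⟩, π, hπ⟩
  obtain ⟨P, ⟨π, hπ⟩, hmin⟩ :=
    WellFounded.has_min (InvImage.wf (fun P : FGProj R => Module.length R P.M) wellFounded_lt)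
      covers hcovers
  refine ⟨P, π, ?_⟩
  by_contra hess
  obtain ⟨Q, hQ, hproj, hQπ⟩ := exists_projective_submodule_lt_top hπ hess
  exact hmin ⟨Q, inferInstance, hproj⟩ ⟨_, hQπ⟩ (Submodule.length_lt hQ.ne)

end ProjectiveCovers

section Reject

variable (R : Type*) [Ring R] (S : Type*) [AddCommGroup S] [Module R S]
  (M : Type*) [AddCommGroup M] [Module R M] {N L : Type*} [AddCommGroup N] [Module R N]
  [AddCommGroup L] [Module R L]

/-- The reject of `S` in `M`, the common kernel of all homomorphisms `M → S`. For `S` simple and `M`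
of finite length, `M / reject R S M` is the largest quotient of `M` that is a power of `S`. -/
def reject : Submodule R M :=
  ⨅ f : M →ₗ[R] S, LinearMap.ker f

variable {R S M}

theorem mem_reject {x : M} : x ∈ reject R S M ↔ ∀ f : M →ₗ[R] S, f x = 0 := by
  simp [reject]

theorem mem_reject_prod_iff (e : L ≃ₗ[R] M × N) (x : L) :
    x ∈ reject R S L ↔
      (e x).1 ∈ reject R S M ∧ (e x).2 ∈ reject R S N := by
  simp only [mem_reject]
  refine ⟨fun h => ⟨fun f => h (f ∘ₗ LinearMap.fst R M N ∘ₗ e),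
    fun f => h (f ∘ₗ LinearMap.snd R M N ∘ₗ e)⟩, fun ⟨hM, hN⟩ f => ?_⟩
  have hx : x = e.symm ((e x).1, 0) + e.symm (0, (e x).2) := by simp [← map_add]
  rw [hx, map_add]
  simpa using congrArg₂ (· + ·) (hM (f ∘ₗ e.symm ∘ₗ LinearMap.inl R M N))
    (hN (f ∘ₗ e.symm ∘ₗ LinearMap.inr R M N))

theorem length_quotient_reject_prod (e : L ≃ₗ[R] M × N) :
    Module.length R (L ⧸ reject R S L) =
      Module.length R (M ⧸ reject R S M) + Module.length R (N ⧸ reject R S N) := by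
  let q : L →ₗ[R] (M ⧸ reject R S M) × (N ⧸ reject R S N) :=
    (reject R S M).mkQ.prodMap (reject R S N).mkQ ∘ₗ e
  have hq : Function.Surjective q :=
    (Function.Surjective.prodMap (Submodule.mkQ_surjective _) (Submodule.mkQ_surjective _)).comp
      e.surjective
  have hker : LinearMap.ker q = reject R S L := by
    ext x
    simp [q, mem_reject_prod_iff e]
  rw [← Module.length_prod, ← hker, (q.quotKerEquivOfSurjective hq).length_eq]

theorem IsEssentialEpi.reject_eq_ker [IsSimpleModule R S] {π : M →ₗ[R] S} (hπ : IsEssentialEpi π) :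
    reject R S M = LinearMap.ker π :=
  le_antisymm (iInf_le _ π) (le_iInf hπ.ker_le_ker_of_isSimpleModule)

theorem IsEssentialEpi.reject_eq_top [IsSimpleModule R S] [IsSimpleModule R N] {π : M →ₗ[R] N}
    (hπ : IsEssentialEpi π) (hne : IsEmpty (N ≃ₗ[R] S)) : reject R S M = ⊤ := by
  refine top_le_iff.1 (le_iInf fun f => ?_)
  by_contra hf
  have hfs : Function.Surjective f :=
    LinearMap.surjective_of_ne_zero fun h => hf (by simp [h])
  have hker : LinearMap.ker π = LinearMap.ker f :=
    ((LinearMap.isCoatom_ker_of_surjective hπ.surjective).le_iff_eq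
      (fun h => hf h.ge)).1 (hπ.ker_le_ker_of_isSimpleModule f) |>.symm
  exact hne.false ((π.quotKerEquivOfSurjective hπ.surjective).symm.trans
    ((Submodule.quotEquivOfEq _ _ hker).trans (f.quotKerEquivOfSurjective hfs)))

end Reject

section HeadMultiplicity

variable {R : Type} [Ring R] [IsArtinianRing R] {S N : Type*} [AddCommGroup S] [Module R S]
  [AddCommGroup N] [Module R N]

variable (S) in
/-- The functional on `K₀` sending `[P]` to the multiplicity of the simple module `S` in the head of
`P`. -/
def headMultiplicity : K0 R →+ ℤ :=
  K0.lift (fun P => (Module.length R (P.M ⧸ reject R S P.M)).toNat) <| by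
    rintro P Q L ⟨e⟩
    rw [length_quotient_reject_prod e, ENat.toNat_add Module.length_ne_top Module.length_ne_top,
      Nat.cast_add]

variable [IsSimpleModule R S]

theorem IsEssentialEpi.headMultiplicity_self {P : FGProj R} {π : P.M →ₗ[R] S}
    (hπ : IsEssentialEpi π) : headMultiplicity S (K0cls P) = 1 := by
  rw [headMultiplicity, K0.lift_cls, hπ.reject_eq_ker,
    (π.quotKerEquivOfSurjective hπ.surjective).length_eq, Module.length_eq_one]
  simp

theorem IsEssentialEpi.headMultiplicity_of_isEmpty_equiv [IsSimpleModule R N] {P : FGProj R}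
    {π : P.M →ₗ[R] N} (hπ : IsEssentialEpi π) (hne : IsEmpty (N ≃ₗ[R] S)) :
    headMultiplicity S (K0cls P) = 0 := by
  rw [headMultiplicity, K0.lift_cls, hπ.reject_eq_top hne]
  simp

end HeadMultiplicity

section SimpleModules

variable {R : Type} [Ring R] {ι : Type*}

/-- The family `S` consists of one module from each isomorphism class of simple `R`-modules. -/
structure IsCompleteSimpleSystem (R : Type) [Ring R] (S : ι → Type) [∀ i, AddCommGroup (S i)]
    [∀ i, Module R (S i)] : Prop where
  isSimpleModule : ∀ i, IsSimpleModule R (S i)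
  eq_of_equiv : ∀ {i j}, (S i ≃ₗ[R] S j) → i = j
  exists_equiv : ∀ (M : Type) [AddCommGroup M] [Module R M] [IsSimpleModule R M],
    ∃ i, Nonempty (M ≃ₗ[R] S i)

/-- Maximal left ideals are equivalent if the simple modules they define are isomorphic. -/
def maximalLeftIdealSetoid (R : Type) [Ring R] : Setoid {m : Submodule R R // IsCoatom m} where
  r m n := Nonempty ((R ⧸ m.1) ≃ₗ[R] (R ⧸ n.1))
  iseqv := ⟨fun _ => ⟨.refl _ _⟩, fun ⟨e⟩ => ⟨e.symm⟩, fun ⟨e⟩ ⟨f⟩ => ⟨e.trans f⟩⟩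

/-- The isomorphism classes of simple `R`-modules. Presenting simple modules as quotients of `R`
keeps this type in `Type`. -/
def Irr (R : Type) [Ring R] : Type :=
  Quotient (maximalLeftIdealSetoid R)

/-- A simple module representing the isomorphism class `i`. -/
abbrev Irr.Carrier (i : Irr R) : Type :=
  R ⧸ (Quotient.out i).1

theorem Irr.isCompleteSimpleSystem (R : Type) [Ring R] :
    IsCompleteSimpleSystem R (Irr.Carrier (R := R)) where
  isSimpleModule i := isSimpleModule_iff_isCoatom.2 (Quotient.out i).2
  eq_of_equiv e := Quotient.out_equiv_out.1 ⟨e⟩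
  exists_equiv M _ _ hM := by
    obtain ⟨m, hm, ⟨e⟩⟩ := isSimpleModule_iff_quot_maximal.1 hM
    obtain ⟨f⟩ := Quotient.mk_out (s := maximalLeftIdealSetoid R) ⟨m, hm.out⟩
    exact ⟨_, ⟨e.trans f.symm⟩⟩

namespace IsCompleteSimpleSystem

variable {S : ι → Type} [∀ i, AddCommGroup (S i)] [∀ i, Module R (S i)]

theorem exists_surjective (hS : IsCompleteSimpleSystem R S) (M : Type) [AddCommGroup M] [Module R M]
    [Module.Finite R M] [Nontrivial M] :
    ∃ (i : ι) (f : M →ₗ[R] S i), Function.Surjective f := by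
  obtain ⟨m, hm⟩ := IsCoatomic.exists_coatom (Submodule R M)
  have : IsSimpleModule R (M ⧸ m) := isSimpleModule_iff_isCoatom.2 hm
  obtain ⟨i, ⟨e⟩⟩ := hS.exists_equiv (M ⧸ m)
  exact ⟨i, e ∘ₗ m.mkQ, e.surjective.comp m.mkQ_surjective⟩

theorem exists_linearMap_ne_zero [IsArtinianRing R] (hS : IsCompleteSimpleSystem R S) (M : Type)
    [AddCommGroup M] [Module R M] [Nontrivial M] : ∃ (i : ι) (f : S i →ₗ[R] M), f ≠ 0 := by
  obtain ⟨x, hx⟩ := exists_ne (0 : M)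
  have : Nontrivial (R ∙ x) := Submodule.nontrivial_span_singleton hx
  obtain ⟨X, hX⟩ := IsAtomic.exists_atom (Submodule R (R ∙ x))
  have : IsSimpleModule R X := isSimpleModule_iff_isAtom.2 hX
  obtain ⟨i, ⟨e⟩⟩ := hS.exists_equiv X
  have := hS.isSimpleModule i
  have := IsSimpleModule.nontrivial R (S i)
  refine ⟨i, (R ∙ x).subtype ∘ₗ X.subtype ∘ₗ e.symm, fun h => ?_⟩
  obtain ⟨s, hs⟩ := exists_ne (0 : S i)
  exact hs (by simpa using LinearMap.congr_fun h s)

variable {P : ι → FGProj R} {π : ∀ i, (P i).M →ₗ[R] S i}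

theorem linearIndependent_cls [IsArtinianRing R] (hS : IsCompleteSimpleSystem R S)
    (hπ : ∀ i, IsEssentialEpi (π i)) : LinearIndependent ℤ fun i => K0cls (P i) := by
  classical
  have := hS.isSimpleModule
  let multiplicities : K0 R →ₗ[ℤ] ι → ℤ :=
    LinearMap.pi fun j => (headMultiplicity (S j)).toIntLinearMap
  have hdual : multiplicities ∘ (fun i => K0cls (P i)) = fun i => Pi.single i 1 := by
    ext i j
    obtain rfl | hij := eq_or_ne j i
    · simpa [multiplicities] using (hπ j).headMultiplicity_self
    · simpa [multiplicities, hij] using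
        (hπ i).headMultiplicity_of_isEmpty_equiv ⟨fun e => hij (hS.eq_of_equiv e).symm⟩
  exact .of_comp multiplicities (hdual ▸ Pi.linearIndependent_single_one ι ℤ)

/-- A nonzero `Q` maps onto some `S i`, hence onto its projective cover `P i`, which therefore
splits off. -/
theorem cls_mem_span [IsArtinianRing R] (hS : IsCompleteSimpleSystem R S)
    (hπ : ∀ i, IsEssentialEpi (π i)) (Q : FGProj R) :
    K0cls Q ∈ Submodule.span ℤ (Set.range fun i => K0cls (P i)) := by
  induction Q using (InvImage.wf (fun Q : FGProj R => Module.length R Q.M)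
    wellFounded_lt).induction with
  | _ Q ih =>
  rcases subsingleton_or_nontrivial Q.M with _ | _
  · rw [K0.cls_eq_zero]
    exact zero_mem _
  · obtain ⟨i, f, hf⟩ := hS.exists_surjective Q.M
    obtain ⟨g, rfl⟩ := Module.projective_lifting_property (π i) f (hπ i).surjective
    obtain ⟨u⟩ := exists_equiv_ker_prod g ((hπ i).surjective_of_comp hf)
    have hproj : Module.Projective R (LinearMap.ker g) :=
      .of_split (u.symm.toLinearMap ∘ₗ LinearMap.inl R _ _)
        (LinearMap.fst R _ _ ∘ₗ u.toLinearMap) (by ext; simp)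
    let K : FGProj R := ⟨LinearMap.ker g, inferInstance, hproj⟩
    have hlt : Module.length R K.M < Module.length R Q.M := by
      refine Submodule.length_lt fun htop => ?_
      have := hS.isSimpleModule i
      have := IsSimpleModule.nontrivial R (S i)
      obtain ⟨s, hs⟩ := exists_ne (0 : S i)
      obtain ⟨x, rfl⟩ := hf s
      exact hs (by simp [LinearMap.ker_eq_top.1 htop])
    rw [K0.cls_eq_add (P := K) (Q := P i) u]
    exact add_mem (ih K hlt) (Submodule.subset_span ⟨i, rfl⟩)

theorem top_le_span_cls [IsArtinianRing R] (hS : IsCompleteSimpleSystem R S)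
    (hπ : ∀ i, IsEssentialEpi (π i)) :
    ⊤ ≤ Submodule.span ℤ (Set.range fun i => K0cls (P i)) := by
  rw [← Submodule.toAddSubgroup_le, Submodule.top_toAddSubgroup, ← K0.closure_range_cls,
    AddSubgroup.closure_le]
  rintro _ ⟨Q, rfl⟩
  exact hS.cls_mem_span hπ Q

/-- The classes of the indecomposable projective modules are a basis of `K₀`. -/
def basis [IsArtinianRing R] (hS : IsCompleteSimpleSystem R S)
    (hπ : ∀ i, IsEssentialEpi (π i)) : Module.Basis ι ℤ (K0 R) :=
  .mk (hS.linearIndependent_cls hπ) (hS.top_le_span_cls hπ)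

@[simp]
theorem basis_apply [IsArtinianRing R] (hS : IsCompleteSimpleSystem R S)
    (hπ : ∀ i, IsEssentialEpi (π i)) (i : ι) : hS.basis hπ i = K0cls (P i) :=
  Module.Basis.mk_apply _ _ _

end IsCompleteSimpleSystem

end SimpleModules

namespace ExternalTensor

section Module

variable {𝕜 A B M N M' N' L U : Type*}
  [CommRing 𝕜] [Ring A] [Ring B] [Algebra 𝕜 A] [Algebra 𝕜 B]
  [AddCommGroup M] [Module 𝕜 M] [Module A M] [IsScalarTower 𝕜 A M]
  [AddCommGroup N] [Module 𝕜 N] [Module B N] [IsScalarTower 𝕜 B N]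
  [AddCommGroup M'] [Module 𝕜 M'] [Module A M'] [IsScalarTower 𝕜 A M']
  [AddCommGroup N'] [Module 𝕜 N'] [Module B N'] [IsScalarTower 𝕜 B N']
  [AddCommGroup L] [Module 𝕜 L]
  [AddCommGroup U] [Module (A ⊗[𝕜] B) U]

/-- The external tensor product of an `A`-module and a `B`-module as an `A ⊗ B`-module. The priority
is low because for `M = A` and `N = B` the ring `A ⊗ B` also acts by multiplication. -/
scoped instance (priority := low) module : Module (A ⊗[𝕜] B) (M ⊗[𝕜] N) :=
  Module.compHom (M ⊗[𝕜] N) ((Module.endTensorEndAlgHom (R := 𝕜) (S := 𝕜) (A := 𝕜)).comp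
    (Algebra.TensorProduct.map (Algebra.lsmul 𝕜 𝕜 M : A →ₐ[𝕜] _)
      (Algebra.lsmul 𝕜 𝕜 N : B →ₐ[𝕜] _))).toRingHom

theorem tmul_smul_tmul (a : A) (b : B) (m : M) (n : N) :
    (a ⊗ₜ[𝕜] b) • (m ⊗ₜ[𝕜] n) = (a • m) ⊗ₜ[𝕜] (b • n) :=
  rfl

/-- An additive map out of `M ⊗ N` is `A ⊗ B`-linear as soon as it is so on pure tensors. -/
def linearMapOfTmul (f : M ⊗[𝕜] N →+ U)
    (hf : ∀ (a : A) (b : B) m n, f ((a • m) ⊗ₜ (b • n)) = (a ⊗ₜ[𝕜] b) • f (m ⊗ₜ n)) :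
    M ⊗[𝕜] N →ₗ[A ⊗[𝕜] B] U where
  __ := f
  map_smul' r x := by
    change f (r • x) = r • f x
    induction r with
    | zero => simp
    | add r s hr hs => rw [add_smul, add_smul, map_add, hr, hs]
    | tmul a b =>
      induction x with
      | zero => simp
      | add x y hx hy => rw [smul_add, map_add, map_add, hx, hy, smul_add]
      | tmul m n => exact hf a b m n

/-- An additive equivalence out of `M ⊗ N` is `A ⊗ B`-linear as soon as it is so on pure
tensors. -/
def linearEquivOfTmul (e : M ⊗[𝕜] N ≃+ U)
    (he : ∀ (a : A) (b : B) m n, e ((a • m) ⊗ₜ (b • n)) = (a ⊗ₜ[𝕜] b) • e (m ⊗ₜ n)) :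
    M ⊗[𝕜] N ≃ₗ[A ⊗[𝕜] B] U :=
  { linearMapOfTmul e.toAddMonoidHom he, e with }

theorem addMonoidHom_ext {G : Type*} [AddCommGroup G] {f g : M ⊗[𝕜] N →+ G}
    (h : ∀ m n, f (m ⊗ₜ n) = g (m ⊗ₜ n)) : f = g := by
  ext x
  induction x with
  | zero => simp
  | tmul m n => exact h m n
  | add x y hx hy => rw [map_add, map_add, hx, hy]

theorem linearMap_ext {f g : M ⊗[𝕜] N →ₗ[A ⊗[𝕜] B] U} (h : ∀ m n, f (m ⊗ₜ n) = g (m ⊗ₜ n)) :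
    f = g :=
  LinearMap.toAddMonoidHom_injective (addMonoidHom_ext h)

theorem exists_apply_tmul_ne_zero {f : M ⊗[𝕜] N →ₗ[A ⊗[𝕜] B] U} (hf : f ≠ 0) :
    ∃ m n, f (m ⊗ₜ n) ≠ 0 := by
  by_contra! h
  exact hf (linearMap_ext h)

/-- The external tensor product of an `A`-linear and a `B`-linear map. -/
def map (f : M →ₗ[A] M') (g : N →ₗ[B] N') : M ⊗[𝕜] N →ₗ[A ⊗[𝕜] B] M' ⊗[𝕜] N' :=
  linearMapOfTmul
    (TensorProduct.map (f.restrictScalars 𝕜) (g.restrictScalars 𝕜)).toAddMonoidHom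
    fun a b m n => by simp [tmul_smul_tmul]

@[simp]
theorem map_tmul (f : M →ₗ[A] M') (g : N →ₗ[B] N') (m : M) (n : N) :
    map (𝕜 := 𝕜) f g (m ⊗ₜ n) = f m ⊗ₜ g n :=
  rfl

theorem map_surjective {f : M →ₗ[A] M'} {g : N →ₗ[B] N'} (hf : Function.Surjective f)
    (hg : Function.Surjective g) : Function.Surjective (map (𝕜 := 𝕜) f g) :=
  TensorProduct.map_surjective (g := f.restrictScalars 𝕜) hf (g' := g.restrictScalars 𝕜) hg

theorem ker_map_le_ker {f : M →ₗ[A] M'} {g : N →ₗ[B] N'} (hf : Function.Surjective f)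
    (hg : Function.Surjective g) {h : M ⊗[𝕜] N →ₗ[A ⊗[𝕜] B] U}
    (hleft : ∀ m n, f m = 0 → h (m ⊗ₜ n) = 0) (hright : ∀ m n, g n = 0 → h (m ⊗ₜ n) = 0) :
    LinearMap.ker (map f g) ≤ LinearMap.ker h := by
  intro x hx
  have hx' : x ∈ LinearMap.ker
      (TensorProduct.map (f.restrictScalars 𝕜) (g.restrictScalars 𝕜)) := hx
  rw [TensorProduct.map_ker (LinearMap.exact_subtype_ker_map (f.restrictScalars 𝕜)) hf
    (LinearMap.exact_subtype_ker_map (g.restrictScalars 𝕜)) hg] at hx'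
  obtain ⟨_, ⟨y, rfl⟩, _, ⟨z, rfl⟩, rfl⟩ := Submodule.mem_sup.1 hx'
  have hy : h.toAddMonoidHom.comp
      (LinearMap.lTensor M (LinearMap.ker (g.restrictScalars 𝕜)).subtype).toAddMonoidHom = 0 :=
    addMonoidHom_ext fun m n => hright m n n.2
  have hz : h.toAddMonoidHom.comp
      (LinearMap.rTensor N (LinearMap.ker (f.restrictScalars 𝕜)).subtype).toAddMonoidHom = 0 :=
    addMonoidHom_ext fun m n => hleft m n m.2
  rw [LinearMap.mem_ker, map_add]
  exact (congrArg₂ (· + ·) (DFunLike.congr_fun hy y) (DFunLike.congr_fun hz z)).trans (add_zero 0)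

/-- Distributivity over direct sums in the first factor. -/
def prodLeftEquiv [Module A L] [IsScalarTower 𝕜 A L] (e : L ≃ₗ[A] M × M') :
    L ⊗[𝕜] N ≃ₗ[A ⊗[𝕜] B] (M ⊗[𝕜] N) × (M' ⊗[𝕜] N) :=
  linearEquivOfTmul ((TensorProduct.congr (e.restrictScalars 𝕜) (.refl 𝕜 N)).trans
    (TensorProduct.prodLeft 𝕜 𝕜 M M' N)).toAddEquiv
    fun a b l n => by
      change TensorProduct.prodLeft 𝕜 𝕜 M M' N (e (a • l) ⊗ₜ (b • n)) = _
      rw [map_smul]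
      rfl

/-- Distributivity over direct sums in the second factor. -/
def prodRightEquiv [Module B L] [IsScalarTower 𝕜 B L] (e : L ≃ₗ[B] N × N') :
    M ⊗[𝕜] L ≃ₗ[A ⊗[𝕜] B] (M ⊗[𝕜] N) × (M ⊗[𝕜] N') :=
  linearEquivOfTmul ((TensorProduct.congr (.refl 𝕜 M) (e.restrictScalars 𝕜)).trans
    (TensorProduct.prodRight 𝕜 𝕜 M N N')).toAddEquiv
    fun a b m l => by simp [tmul_smul_tmul]

variable (𝕜 A B) in
/-- The external tensor product of free modules is free. -/
def finsuppEquiv (ι κ : Type*) : (ι →₀ A) ⊗[𝕜] (κ →₀ B) ≃ₗ[A ⊗[𝕜] B] (ι × κ →₀ A ⊗[𝕜] B) :=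
  linearEquivOfTmul (finsuppTensorFinsupp 𝕜 𝕜 A B ι κ).toAddEquiv fun a b m n => by
    ext ⟨i, k⟩
    simp

variable (𝕜 A B M N) in
theorem finite [Module.Finite A M] [Module.Finite B N] : Module.Finite (A ⊗[𝕜] B) (M ⊗[𝕜] N) := by
  obtain ⟨m, f, hf⟩ := Module.Finite.exists_fin' A M
  obtain ⟨n, g, hg⟩ := Module.Finite.exists_fin' B N
  have hfree := Module.Finite.equiv (finsuppEquiv 𝕜 A B (Fin m) (Fin n)).symm
  refine .of_surjective (map (f ∘ₗ (Finsupp.linearEquivFunOnFinite A A (Fin m)).toLinearMap)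
    (g ∘ₗ (Finsupp.linearEquivFunOnFinite B B (Fin n)).toLinearMap)) (map_surjective ?_ ?_)
  · exact hf.comp (LinearEquiv.surjective _)
  · exact hg.comp (LinearEquiv.surjective _)

variable (𝕜 A B M N) in
theorem projective [Module.Projective A M] [Module.Projective B N] :
    Module.Projective (A ⊗[𝕜] B) (M ⊗[𝕜] N) := by
  obtain ⟨s, hs⟩ := Module.projective_def'.1 ‹Module.Projective A M›
  obtain ⟨t, ht⟩ := Module.projective_def'.1 ‹Module.Projective B N›
  have hfree := Module.Projective.of_equiv (finsuppEquiv 𝕜 A B M N).symm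
  refine .of_split (map s t) (map (Finsupp.linearCombination A id) (Finsupp.linearCombination B id))
    (linearMap_ext fun m n => ?_)
  simpa using congrArg₂ (· ⊗ₜ[𝕜] ·) (LinearMap.congr_fun hs m) (LinearMap.congr_fun ht n)

/-- The homomorphism `M ⊗ N → U` corresponding to `N → Hom_A(M, U)`. -/
def uncurry [Module A U] [Module B U] [SMulCommClass A B U]
    (hU : ∀ (a : A) (b : B) (u : U), (a ⊗ₜ[𝕜] b) • u = a • b • u) (h : N →ₗ[B] M →ₗ[A] U) :
    M ⊗[𝕜] N →ₗ[A ⊗[𝕜] B] U :=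
  have hscalar (c : 𝕜) (u : U) : algebraMap 𝕜 A c • u = algebraMap 𝕜 B c • u := by
    have hc : (c • (1 : A)) ⊗ₜ[𝕜] (1 : B) = (1 : A) ⊗ₜ[𝕜] (c • (1 : B)) :=
      TensorProduct.smul_tmul _ _ _
    rw [← Algebra.algebraMap_eq_smul_one, ← Algebra.algebraMap_eq_smul_one] at hc
    simpa [hU] using congrArg (· • u) hc
  linearMapOfTmul
    (TensorProduct.liftAddHom (LinearMap.toAddMonoidHom'.comp h.toAddMonoidHom).flip fun c m n => by
      change h n (c • m) = h (c • n) m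
      rw [← algebraMap_smul A c m, ← algebraMap_smul B c n, map_smul, map_smul, hscalar,
        LinearMap.smul_apply])
    fun a b m n => by
      change h (b • n) (a • m) = (a ⊗ₜ[𝕜] b) • h n m
      rw [map_smul, map_smul, hU, LinearMap.smul_apply]

@[simp]
theorem uncurry_tmul [Module A U] [Module B U] [SMulCommClass A B U]
    (hU : ∀ (a : A) (b : B) (u : U), (a ⊗ₜ[𝕜] b) • u = a • b • u) (h : N →ₗ[B] M →ₗ[A] U)
    (m : M) (n : N) : uncurry hU h (m ⊗ₜ n) = h n m :=
  rfl

/-- Contraction of the first factor against a functional. -/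
def contractLeft (φ : M →ₗ[𝕜] 𝕜) : M ⊗[𝕜] N →ₗ[𝕜] N :=
  TensorProduct.lid 𝕜 N ∘ₗ φ.rTensor N

/-- Contraction of the second factor against a functional. -/
def contractRight (φ : N →ₗ[𝕜] 𝕜) : M ⊗[𝕜] N →ₗ[𝕜] M :=
  TensorProduct.rid 𝕜 M ∘ₗ φ.lTensor M

theorem contractLeft_smul (φ : M →ₗ[𝕜] 𝕜) (b : B) (x : M ⊗[𝕜] N) :
    contractLeft φ (((1 : A) ⊗ₜ[𝕜] b) • x) = b • contractLeft φ x := by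
  induction x with
  | zero => simp
  | tmul m n => simp [contractLeft, tmul_smul_tmul, smul_algebra_smul_comm]
  | add x y hx hy => rw [smul_add, map_add, map_add, hx, hy, smul_add]

theorem contractRight_smul (φ : N →ₗ[𝕜] 𝕜) (a : A) (x : M ⊗[𝕜] N) :
    contractRight φ ((a ⊗ₜ[𝕜] (1 : B)) • x) = a • contractRight φ x := by
  induction x with
  | zero => simp
  | tmul m n => simp [contractRight, tmul_smul_tmul, smul_algebra_smul_comm]
  | add x y hx hy => rw [smul_add, map_add, map_add, hx, hy, smul_add]

theorem tmul_smul_of_rankOne {φ : M →ₗ[𝕜] 𝕜} {m : M} {a : A} (ha : ∀ x, a • x = φ.smulRight m x)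
    (b : B) (x : M ⊗[𝕜] N) : (a ⊗ₜ[𝕜] b) • x = m ⊗ₜ (b • contractLeft φ x) := by
  induction x with
  | zero => simp
  | tmul y n => simp [contractLeft, tmul_smul_tmul, ha, TensorProduct.smul_tmul,
      smul_algebra_smul_comm]
  | add x y hx hy => rw [smul_add, hx, hy, map_add, smul_add, TensorProduct.tmul_add]

end Module

section FieldCoefficients

variable {𝕜 A B M N M' N' : Type*} [Field 𝕜] [Ring A] [Ring B] [Algebra 𝕜 A] [Algebra 𝕜 B]
  [AddCommGroup M] [Module 𝕜 M] [Module A M] [IsScalarTower 𝕜 A M]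
  [AddCommGroup N] [Module 𝕜 N] [Module B N] [IsScalarTower 𝕜 B N]
  [AddCommGroup M'] [Module 𝕜 M'] [Module A M'] [IsScalarTower 𝕜 A M']
  [AddCommGroup N'] [Module 𝕜 N'] [Module B N'] [IsScalarTower 𝕜 B N']

theorem exists_contractLeft_ne_zero {x : M ⊗[𝕜] N} (hx : x ≠ 0) :
    ∃ φ : M →ₗ[𝕜] 𝕜, contractLeft φ x ≠ 0 := by
  classical
  let b := Module.Basis.ofVectorSpace 𝕜 M
  have hne : TensorProduct.equivFinsuppOfBasisLeft b x ≠ 0 := by simpa using hx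
  obtain ⟨i, hi⟩ := Finsupp.ne_iff.1 hne
  exact ⟨b.coord i, by rwa [TensorProduct.equivFinsuppOfBasisLeft_apply] at hi⟩

theorem exists_contractRight_ne_zero {x : M ⊗[𝕜] N} (hx : x ≠ 0) :
    ∃ φ : N →ₗ[𝕜] 𝕜, contractRight φ x ≠ 0 := by
  classical
  let b := Module.Basis.ofVectorSpace 𝕜 N
  have hne : TensorProduct.equivFinsuppOfBasisRight b x ≠ 0 := by simpa using hx
  obtain ⟨i, hi⟩ := Finsupp.ne_iff.1 hne
  exact ⟨b.coord i, by rwa [TensorProduct.equivFinsuppOfBasisRight_apply] at hi⟩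

theorem exists_linearMap_left_apply_ne_zero {f : M ⊗[𝕜] N →ₗ[A ⊗[𝕜] B] M' ⊗[𝕜] N'} {m : M} {n : N}
    (hf : f (m ⊗ₜ n) ≠ 0) : ∃ g : M →ₗ[A] M', g m ≠ 0 := by
  obtain ⟨φ, hφ⟩ := exists_contractRight_ne_zero hf
  refine ⟨{ toFun := fun x => contractRight φ (f (x ⊗ₜ n)), map_add' := fun x y => ?_,
            map_smul' := fun a x => ?_ }, hφ⟩
  · rw [TensorProduct.add_tmul, map_add, map_add]
  · have hx : (a • x) ⊗ₜ[𝕜] n = (a ⊗ₜ[𝕜] (1 : B)) • (x ⊗ₜ[𝕜] n) := by simp [tmul_smul_tmul]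
    rw [hx, map_smul, contractRight_smul, RingHom.id_apply]

theorem exists_linearMap_right_apply_ne_zero {f : M ⊗[𝕜] N →ₗ[A ⊗[𝕜] B] M' ⊗[𝕜] N'} {m : M} {n : N}
    (hf : f (m ⊗ₜ n) ≠ 0) : ∃ g : N →ₗ[B] N', g n ≠ 0 := by
  obtain ⟨φ, hφ⟩ := exists_contractLeft_ne_zero hf
  refine ⟨{ toFun := fun x => contractLeft φ (f (m ⊗ₜ x)), map_add' := fun x y => ?_,
            map_smul' := fun b x => ?_ }, hφ⟩
  · rw [TensorProduct.tmul_add, map_add, map_add]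
  · have hx : m ⊗ₜ[𝕜] (b • x) = ((1 : A) ⊗ₜ[𝕜] b) • (m ⊗ₜ[𝕜] x) := by simp [tmul_smul_tmul]
    rw [hx, map_smul, contractLeft_smul, RingHom.id_apply]

end FieldCoefficients

end ExternalTensor

section TensorProductAlgebra

open scoped ExternalTensor

section ScalarEndomorphisms

variable {𝕜 A B S T : Type*} [Field 𝕜] [Ring A] [Ring B] [Algebra 𝕜 A] [Algebra 𝕜 B]
  [AddCommGroup S] [Module 𝕜 S] [Module A S] [IsScalarTower 𝕜 A S]
  [AddCommGroup T] [Module 𝕜 T] [Module B T] [IsScalarTower 𝕜 B T]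

variable (𝕜 A S) in
/-- Every endomorphism of the `A`-module `S` is a scalar from `𝕜`; for simple `S` this is absolute
irreducibility. -/
def HasScalarEndomorphisms : Prop :=
  ∀ f : S →ₗ[A] S, ∃ c : 𝕜, ∀ s, f s = c • s

theorem HasScalarEndomorphisms.exists_smul_eq [IsSimpleModule A S] [Module.Finite 𝕜 S]
    (hS : HasScalarEndomorphisms 𝕜 A S) (f : S →ₗ[𝕜] S) : ∃ a : A, ∀ s, a • s = f s := by
  let F : Module.End (Module.End A S) S :=
    { __ := f.toAddHom
      map_smul' := fun g s => by
        obtain ⟨c, hc⟩ := hS g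
        change f (g s) = g (f s)
        rw [hc, hc, map_smul] }
  obtain ⟨t, ht⟩ := Module.Finite.fg_top (R := 𝕜) (M := S)
  obtain ⟨a, ha⟩ := jacobson_density F t
  exact ⟨a, LinearMap.congr_fun (f := Algebra.lsmul 𝕜 𝕜 S a)
    (LinearMap.ext_on ht fun s hs => (ha s hs).symm)⟩

/-- By density some `a ∈ A` acts on `S` as a rank one operator, which turns a nonzero tensor into a
nonzero pure tensor. -/
theorem HasScalarEndomorphisms.isSimpleModule_tensorProduct [IsSimpleModule A S]
    [Module.Finite 𝕜 S] [IsSimpleModule B T] (hS : HasScalarEndomorphisms 𝕜 A S) :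
    IsSimpleModule (A ⊗[𝕜] B) (S ⊗[𝕜] T) := by
  have := IsSimpleModule.nontrivial A S
  have := IsSimpleModule.nontrivial B T
  refine isSimpleModule_iff_toSpanSingleton_surjective.2 ⟨inferInstance, fun x hx y => ?_⟩
  obtain ⟨φ, hφ⟩ := ExternalTensor.exists_contractLeft_ne_zero hx
  rw [← LinearMap.mem_range]
  induction y with
  | zero => exact zero_mem _
  | add y z hy hz => exact add_mem hy hz
  | tmul s t =>
    obtain ⟨a, ha⟩ := hS.exists_smul_eq (φ.smulRight s)
    obtain ⟨b, rfl⟩ := IsSimpleModule.toSpanSingleton_surjective B hφ t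
    exact ⟨a ⊗ₜ b, ExternalTensor.tmul_smul_of_rankOne ha b x⟩

end ScalarEndomorphisms

section CompleteSimpleSystem

variable {𝕜 A B : Type} [Field 𝕜] [Ring A] [Ring B] [Algebra 𝕜 A] [Algebra 𝕜 B]
  {ι κ : Type*} {S : ι → Type} {T : κ → Type}
  [∀ i, AddCommGroup (S i)] [∀ i, Module 𝕜 (S i)] [∀ i, Module A (S i)]
  [∀ i, IsScalarTower 𝕜 A (S i)]
  [∀ j, AddCommGroup (T j)] [∀ j, Module 𝕜 (T j)] [∀ j, Module B (T j)]
  [∀ j, IsScalarTower 𝕜 B (T j)]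

/-- First find a simple `A`-submodule of `U`, then a simple `B`-submodule of the resulting
nonzero `Hom_A(S i, U)`. -/
theorem IsCompleteSimpleSystem.exists_tensorProduct_linearMap_ne_zero [IsArtinianRing A]
    [IsArtinianRing B] (hS : IsCompleteSimpleSystem A S) (hT : IsCompleteSimpleSystem B T)
    (U : Type) [AddCommGroup U] [Module (A ⊗[𝕜] B) U] [Nontrivial U] :
    ∃ (i : ι) (j : κ) (f : S i ⊗[𝕜] T j →ₗ[A ⊗[𝕜] B] U), f ≠ 0 := by
  let : Module A U :=
    Module.compHom U (Algebra.TensorProduct.includeLeft : A →ₐ[𝕜] A ⊗[𝕜] B).toRingHom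
  let : Module B U :=
    Module.compHom U (Algebra.TensorProduct.includeRight : B →ₐ[𝕜] A ⊗[𝕜] B).toRingHom
  have hU (a : A) (b : B) (u : U) : (a ⊗ₜ[𝕜] b) • u = a • b • u := by
    change _ = (a ⊗ₜ[𝕜] (1 : B)) • ((1 : A) ⊗ₜ[𝕜] b) • u
    simp [smul_smul]
  have : SMulCommClass A B U := ⟨fun a b u => by
    rw [← hU]
    change _ = ((1 : A) ⊗ₜ[𝕜] b) • (a ⊗ₜ[𝕜] (1 : B)) • u
    simp [smul_smul]⟩
  obtain ⟨i, f, hf⟩ := hS.exists_linearMap_ne_zero U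
  have : Nontrivial (S i →ₗ[A] U) := ⟨f, 0, hf⟩
  obtain ⟨j, h, hh⟩ := hT.exists_linearMap_ne_zero (S i →ₗ[A] U)
  refine ⟨i, j, ExternalTensor.uncurry hU h, fun hzero => hh ?_⟩
  ext t s
  rw [← ExternalTensor.uncurry_tmul hU, hzero]
  rfl

theorem IsCompleteSimpleSystem.tensorProduct [IsArtinianRing A] [IsArtinianRing B]
    [∀ i, Module.Finite 𝕜 (S i)]
    (hS : IsCompleteSimpleSystem A S) (hT : IsCompleteSimpleSystem B T)
    (hend : ∀ i, HasScalarEndomorphisms 𝕜 A (S i)) :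
    IsCompleteSimpleSystem (A ⊗[𝕜] B) fun p : ι × κ => S p.1 ⊗[𝕜] T p.2 := by
  have := hS.isSimpleModule
  have := hT.isSimpleModule
  have hsimple (i : ι) (j : κ) : IsSimpleModule (A ⊗[𝕜] B) (S i ⊗[𝕜] T j) :=
    (hend i).isSimpleModule_tensorProduct
  refine ⟨fun p => hsimple p.1 p.2, fun {p q} e => ?_, fun U _ _ _ => ?_⟩
  · have := IsSimpleModule.nontrivial (A ⊗[𝕜] B) (S p.1 ⊗[𝕜] T p.2)
    obtain ⟨s, t, hst⟩ := ExternalTensor.exists_apply_tmul_ne_zero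
      (LinearMap.ne_zero_of_injective (f := e.toLinearMap) e.injective)
    obtain ⟨f, hf⟩ := ExternalTensor.exists_linearMap_left_apply_ne_zero hst
    obtain ⟨g, hg⟩ := ExternalTensor.exists_linearMap_right_apply_ne_zero hst
    have hf' := LinearMap.bijective_of_ne_zero (f := f) fun h => hf (by simp [h])
    have hg' := LinearMap.bijective_of_ne_zero (f := g) fun h => hg (by simp [h])
    exact Prod.ext (hS.eq_of_equiv (.ofBijective f hf')) (hT.eq_of_equiv (.ofBijective g hg'))
  · have := IsSimpleModule.nontrivial (A ⊗[𝕜] B) U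
    obtain ⟨i, j, f, hf⟩ := hS.exists_tensorProduct_linearMap_ne_zero (𝕜 := 𝕜) hT U
    exact ⟨(i, j), ⟨(LinearEquiv.ofBijective f (LinearMap.bijective_of_ne_zero hf)).symm⟩⟩

theorem IsEssentialEpi.tensorProduct (hS : IsCompleteSimpleSystem A S)
    (hT : IsCompleteSimpleSystem B T)
    (hST : IsCompleteSimpleSystem (A ⊗[𝕜] B) fun p : ι × κ => S p.1 ⊗[𝕜] T p.2)
    {M N : Type} {M' N' : Type*} [AddCommGroup M] [Module 𝕜 M] [Module A M] [IsScalarTower 𝕜 A M]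
    [AddCommGroup N] [Module 𝕜 N] [Module B N] [IsScalarTower 𝕜 B N]
    [AddCommGroup M'] [Module 𝕜 M'] [Module A M'] [IsScalarTower 𝕜 A M']
    [AddCommGroup N'] [Module 𝕜 N'] [Module B N'] [IsScalarTower 𝕜 B N']
    [Module.Finite A M] [Module.Finite B N] {π : M →ₗ[A] M'} {ρ : N →ₗ[B] N'}
    (hπ : IsEssentialEpi π) (hρ : IsEssentialEpi ρ) :
    IsEssentialEpi (ExternalTensor.map (𝕜 := 𝕜) π ρ) := by
  have := hS.isSimpleModule
  have := hT.isSimpleModule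
  have := ExternalTensor.finite 𝕜 A B M N
  refine .of_forall_ker_le_coatom
    (ExternalTensor.map_surjective hπ.surjective hρ.surjective) fun m hm => ?_
  have : IsSimpleModule (A ⊗[𝕜] B) ((M ⊗[𝕜] N) ⧸ m) := isSimpleModule_iff_isCoatom.2 hm
  obtain ⟨p, ⟨e⟩⟩ := hST.exists_equiv ((M ⊗[𝕜] N) ⧸ m)
  have hker : LinearMap.ker (e.toLinearMap ∘ₗ m.mkQ) = m := by
    rw [LinearEquiv.ker_comp, Submodule.ker_mkQ]
  rw [← hker]
  refine ExternalTensor.ker_map_le_ker hπ.surjective hρ.surjective (fun x y hx => ?_)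
    (fun x y hy => ?_)
  · by_contra hne
    obtain ⟨g, hg⟩ := ExternalTensor.exists_linearMap_left_apply_ne_zero hne
    exact hg (hπ.ker_le_ker_of_isSimpleModule g hx)
  · by_contra hne
    obtain ⟨g, hg⟩ := ExternalTensor.exists_linearMap_right_apply_ne_zero hne
    exact hg (hρ.ker_le_ker_of_isSimpleModule g hy)

end CompleteSimpleSystem

theorem isArtinianRing_tensorProduct (𝕜 A B : Type*) [CommRing 𝕜] [Ring A] [Ring B] [Algebra 𝕜 A]
    [Algebra 𝕜 B] [Module.Finite 𝕜 A] [IsArtinianRing B] : IsArtinianRing (A ⊗[𝕜] B) := by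
  have : IsArtinianRing (B ⊗[𝕜] A) := .of_finite B (B ⊗[𝕜] A)
  exact (Algebra.TensorProduct.comm 𝕜 B A).toRingEquiv.isArtinianRing

end TensorProductAlgebra

section TensorProductK0

theorem bijective_of_apply_basis {ι M N : Type*} [AddCommGroup M] [AddCommGroup N] [Module ℤ M]
    [Module ℤ N] {f : M →+ N} (b : Module.Basis ι ℤ M) (c : Module.Basis ι ℤ N)
    (hf : ∀ i, f (b i) = c i) : Function.Bijective f := by
  let g : M →ₗ[ℤ] N :=
    { f with map_smul' := fun n x => by simpa using map_intCast_smul f ℤ ℤ n x }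
  have hg : g = b.equiv c (.refl ι) := b.ext fun i => (hf i).trans (by simp)
  have hbij : Function.Bijective g := hg ▸ (b.equiv c (.refl ι)).bijective
  exact hbij

open scoped ExternalTensor

/-- The underlying `𝕜`-module of a module over a `𝕜`-algebra. -/
abbrev FGProj.scalarModule (𝕜 : Type) {A : Type} [CommRing 𝕜] [Ring A] [Algebra 𝕜 A]
    (P : FGProj A) : Module 𝕜 P.M :=
  Module.compHom P.M (algebraMap 𝕜 A)

attribute [local instance] FGProj.scalarModule

variable (𝕜 : Type) {A B : Type} [CommRing 𝕜] [Ring A] [Ring B] [Algebra 𝕜 A] [Algebra 𝕜 B]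

theorem FGProj.isScalarTower (P : FGProj A) : IsScalarTower 𝕜 A P.M :=
  .of_algebraMap_smul fun _ _ => rfl

attribute [local instance] FGProj.isScalarTower

/-- The external tensor product `P ⊗ Q` as a finitely generated projective `A ⊗ B`-module. -/
def FGProj.tensor (P : FGProj A) (Q : FGProj B) : FGProj (A ⊗[𝕜] B) where
  M := P.M ⊗[𝕜] Q.M
  fin := ExternalTensor.finite 𝕜 A B P.M Q.M
  proj := ExternalTensor.projective 𝕜 A B P.M Q.M

namespace K0

variable (A B) in
/-- The biadditive pairing `([P], [Q]) ↦ [P ⊗ Q]`. -/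
def tensorPairing : K0 A →+ K0 B →+ K0 (A ⊗[𝕜] B) :=
  lift (fun P => lift (fun Q => K0cls (P.tensor 𝕜 Q))
    fun _ _ _ ⟨e⟩ => cls_eq_add (ExternalTensor.prodRightEquiv e))
    fun _ _ _ ⟨e⟩ => AddMonoidHom.eq_of_eqOn_dense (closure_range_cls B) <|
      Set.eqOn_range.2 <| funext fun Q => by
        simpa using cls_eq_add (ExternalTensor.prodLeftEquiv e)

variable (A B) in
/-- The homomorphism `K₀(A) ⊗ K₀(B) → K₀(A ⊗ B)` with `[P] ⊗ [Q] ↦ [P ⊗ Q]`. -/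
def tensorHom : K0 A ⊗[ℤ] K0 B →+ K0 (A ⊗[𝕜] B) :=
  TensorProduct.liftAddHom (tensorPairing 𝕜 A B) fun n x y => by simp

theorem tensorHom_cls_tmul_cls (P : FGProj A) (Q : FGProj B) :
    tensorHom 𝕜 A B (K0cls P ⊗ₜ K0cls Q) = K0cls (P.tensor 𝕜 Q) := by
  simp [tensorHom, tensorPairing]

theorem bijective_tensorHom (𝕜 A B : Type) [Field 𝕜] [Ring A] [Ring B] [Algebra 𝕜 A]
    [Algebra 𝕜 B] [FiniteDimensional 𝕜 A] [IsArtinianRing B]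
    (hA : ∀ i : Irr A, HasScalarEndomorphisms 𝕜 A i.Carrier) :
    Function.Bijective (tensorHom 𝕜 A B) := by
  have : IsArtinianRing A := .of_finite 𝕜 A
  have := isArtinianRing_tensorProduct 𝕜 A B
  choose P π hπ using fun i : Irr A => exists_projectiveCover A i.Carrier
  choose Q ρ hρ using fun j : Irr B => exists_projectiveCover B j.Carrier
  have hS := Irr.isCompleteSimpleSystem A
  have hT := Irr.isCompleteSimpleSystem B
  have hST := hS.tensorProduct (𝕜 := 𝕜) hT hA
  let cover (p : Irr A × Irr B) :
      ((P p.1).tensor 𝕜 (Q p.2)).M →ₗ[A ⊗[𝕜] B] p.1.Carrier ⊗[𝕜] p.2.Carrier :=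
    ExternalTensor.map (π p.1) (ρ p.2)
  have hcover (p : Irr A × Irr B) : IsEssentialEpi (cover p) :=
    IsEssentialEpi.tensorProduct hS hT hST (hπ p.1) (hρ p.2)
  refine bijective_of_apply_basis ((hS.basis hπ).tensorProduct (hT.basis hρ)) (hST.basis hcover)
    fun p => ?_
  rw [Module.Basis.tensorProduct_apply', hS.basis_apply, hT.basis_apply, hST.basis_apply,
    tensorHom_cls_tmul_cls]

end K0

end TensorProductK0

theorem stmt17_general (𝕜 A B : Type) [Field 𝕜] [Ring A] [Ring B] [Algebra 𝕜 A] [Algebra 𝕜 B]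
    [FiniteDimensional 𝕜 A] [IsArtinianRing B]
    (hA : ∀ (M : Type) [AddCommGroup M] [Module A M], IsSimpleModule A M →
      ∀ f : M →ₗ[A] M, ∃ c : 𝕜, ∀ m : M, f m = algebraMap 𝕜 A c • m) :
    ∃ e : TensorProduct ℤ (K0 A) (K0 B) ≃+ K0 (TensorProduct 𝕜 A B),
      ∀ (P : FGProj A) (Q : FGProj B) (T : FGProj (TensorProduct 𝕜 A B)),
        (letI : Module 𝕜 P.M := Module.compHom P.M (algebraMap 𝕜 A)
         letI : Module 𝕜 Q.M := Module.compHom Q.M (algebraMap 𝕜 B)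
         ∃ u : T.M ≃+ TensorProduct 𝕜 P.M Q.M,
           ∀ (a : A) (b : B) (p : P.M) (q : Q.M),
             u.symm ((a • p) ⊗ₜ[𝕜] (b • q)) = (a ⊗ₜ[𝕜] b) • u.symm (p ⊗ₜ[𝕜] q)) →
        e (K0cls P ⊗ₜ[ℤ] K0cls Q) = K0cls T := by
  have hscalar (i : Irr A) : HasScalarEndomorphisms 𝕜 A i.Carrier := fun f => by
    simpa using hA i.Carrier ((Irr.isCompleteSimpleSystem A).isSimpleModule i) f
  refine ⟨.ofBijective (K0.tensorHom 𝕜 A B) (K0.bijective_tensorHom 𝕜 A B hscalar), ?_⟩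
  rintro P Q T ⟨u, hu⟩
  let : Module 𝕜 P.M := P.scalarModule 𝕜
  let : Module 𝕜 Q.M := Q.scalarModule 𝕜
  have := P.isScalarTower 𝕜
  have := Q.isScalarTower 𝕜
  exact (K0.tensorHom_cls_tmul_cls 𝕜 P Q).trans
    (K0.cls_eq_of_equiv (ExternalTensor.linearEquivOfTmul u.symm hu))

-- STATEMENT 17
theorem stmt17 (𝕜 A B : Type) [Field 𝕜] [Ring A] [Ring B] [Algebra 𝕜 A] [Algebra 𝕜 B]
    [FiniteDimensional 𝕜 A] [FiniteDimensional 𝕜 B]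
    (hA : ∀ (M : Type) [AddCommGroup M] [Module A M], IsSimpleModule A M →
      ∀ f : M →ₗ[A] M, ∃ c : 𝕜, ∀ m : M, f m = algebraMap 𝕜 A c • m)
    (hB : ∀ (M : Type) [AddCommGroup M] [Module B M], IsSimpleModule B M →
      ∀ f : M →ₗ[B] M, ∃ c : 𝕜, ∀ m : M, f m = algebraMap 𝕜 B c • m) :
    ∃ e : TensorProduct ℤ (K0 A) (K0 B) ≃+ K0 (TensorProduct 𝕜 A B),
      ∀ (P : FGProj A) (Q : FGProj B) (T : FGProj (TensorProduct 𝕜 A B)),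
        (letI : Module 𝕜 P.M := Module.compHom P.M (algebraMap 𝕜 A)
         letI : Module 𝕜 Q.M := Module.compHom Q.M (algebraMap 𝕜 B)
         ∃ u : T.M ≃+ TensorProduct 𝕜 P.M Q.M,
           ∀ (a : A) (b : B) (p : P.M) (q : Q.M),
             u.symm ((a • p) ⊗ₜ[𝕜] (b • q)) = (a ⊗ₜ[𝕜] b) • u.symm (p ⊗ₜ[𝕜] q)) →
        e (K0cls P ⊗ₜ[ℤ] K0cls Q) = K0cls T := by
  have : IsArtinianRing B := .of_finite 𝕜 B
  exact stmt17_general 𝕜 A B hA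

end
end

section
/- Let 𝕜 be a field, let A and B be finite-dimensional ℤ-graded 𝕜-algebras, and let α : A → B be a surjective grading-preserving 𝕜-algebra homomorphism. Then the induced homomorphism K₀(α) : K₀(A) → K₀(B) on Grothendieck groups of finitely generated graded projective modules is surjective. -/
/-!
`K₀` of a finite-dimensional ℤ-graded algebra over a field 𝕜: the Grothendieck group
of finitely generated graded projective modules (with isomorphism classes taken under
degree-preserving isomorphisms), and the surjectivity of the map on `K₀` induced by a
surjective grading-preserving algebra homomorphism.
-/

noncomputable section

/-- A bundled finitely generated graded projective (left) module over a ℤ-graded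
`𝕜`-algebra `A` with grading `𝒜`. -/
structure GrFGProj (𝕜 : Type) [Field 𝕜] (A : Type) [Ring A] [Algebra 𝕜 A]
    (𝒜 : ℤ → Submodule 𝕜 A) : Type 1 where
  M : Type
  [acg : AddCommGroup M]
  [mod : Module A M]
  grading : ℤ → AddSubgroup M
  internal : DirectSum.IsInternal grading
  smul_mem : ∀ (d e : ℤ) (a : A) (m : M), a ∈ 𝒜 d → m ∈ grading e → a • m ∈ grading (d + e)
  fin : Module.Finite A M
  proj : Module.Projective A M

attribute [instance] GrFGProj.acg GrFGProj.mod

variable (𝕜 : Type) [Field 𝕜] (A : Type) [Ring A] [Algebra 𝕜 A] (𝒜 : ℤ → Submodule 𝕜 A)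

/-- Degree-preserving isomorphism of graded modules. -/
def GrIso (P Q : GrFGProj 𝕜 A 𝒜) : Prop :=
  ∃ e : P.M ≃ₗ[A] Q.M, ∀ d : ℤ,
    (P.grading d).map e.toLinearMap.toAddMonoidHom = Q.grading d

/-- The graded `K₀` of a graded algebra: the free abelian group on isomorphism classes
(under degree-preserving isomorphism) of finitely generated graded projective modules,
modulo the relations `[R] = [P] + [Q]` whenever `R ≅ P ⊕ Q` as graded modules. -/
def K0gr : Type 1 :=
  FreeAbelianGroup (Quot (GrIso 𝕜 A 𝒜)) ⧸
    AddSubgroup.closure {z | ∃ P Q R : GrFGProj 𝕜 A 𝒜,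
      (∃ e : R.M ≃ₗ[A] P.M × Q.M, ∀ d : ℤ,
        (R.grading d).map e.toLinearMap.toAddMonoidHom =
          (P.grading d).prod (Q.grading d)) ∧
      z = FreeAbelianGroup.of (Quot.mk (GrIso 𝕜 A 𝒜) R) -
        FreeAbelianGroup.of (Quot.mk (GrIso 𝕜 A 𝒜) P) -
        FreeAbelianGroup.of (Quot.mk (GrIso 𝕜 A 𝒜) Q)}

instance : AddCommGroup (K0gr 𝕜 A 𝒜) := QuotientAddGroup.Quotient.addCommGroup _

/-- The class `[P] ∈ K₀` of a finitely generated graded projective module `P`. -/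
def K0grcls (P : GrFGProj 𝕜 A 𝒜) : K0gr 𝕜 A 𝒜 :=
  QuotientAddGroup.mk (FreeAbelianGroup.of (Quot.mk (GrIso 𝕜 A 𝒜) P))

/-!
It suffices to realise each graded projective `B`-module `Q` as a base change. Homogeneous
generators of `Q` give a degree-preserving surjection `π` from a free graded module; it has a
degree-preserving section `j`, so `Q` is the image of the idempotent `j ∘ π`, which is a matrix `E`
with homogeneous entries. Lifting the entries of `E` to homogeneous elements of `A` gives a matrix
`G` in an algebra of graded matrices which is finite-dimensional as soon as each `𝒜 d` is. Some
polynomial in `G` is then an idempotent `F` still lying over `E`; no nilpotency of `ker α` is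
involved. The row space of `F` is a graded projective `A`-module with base change `Q`.
-/

open DirectSum
open scoped Matrix

section IdempotentLifting

theorem exists_isIdempotentElem_map_eq_of_isArtinianRing {S T : Type*} [CommRing S]
    [IsArtinianRing S] [Semiring T] (φ : S →+* T) {a : S} (ha : IsIdempotentElem (φ a)) :
    ∃ e : S, IsIdempotentElem e ∧ φ e = φ a := by
  obtain ⟨n, y, hy⟩ := IsArtinian.exists_pow_succ_smul_dvd a (1 : S)
  have hay : a ^ (n + 1) * (a * y) = a ^ (n + 1) := by
    calc a ^ (n + 1) * (a * y) = a * (a ^ (n + 1) • y) := by rw [smul_eq_mul]; ring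
      _ = a ^ (n + 1) := by rw [hy, smul_eq_mul]; ring
  have hstable (m : ℕ) : a ^ (n + 1) * (a * y) ^ m = a ^ (n + 1) := by
    induction m with
    | zero => simp
    | succ m ih => rw [pow_succ (a * y), ← mul_assoc, ih, hay]
  have hpow : φ (a ^ (n + 1)) = φ a := by rw [map_pow, ha.pow_succ_eq]
  -- This is the projection onto the part of the Fitting decomposition on which `a` is invertible.
  refine ⟨(a * y) ^ (n + 1), ?_, ?_⟩
  · calc (a * y) ^ (n + 1) * (a * y) ^ (n + 1)
        = y ^ (n + 1) * (a ^ (n + 1) * (a * y) ^ (n + 1)) := by ring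
      _ = (a * y) ^ (n + 1) := by rw [hstable]; ring
  · calc φ ((a * y) ^ (n + 1))
        = φ a * φ (y ^ (n + 1)) := by rw [mul_pow, map_mul, hpow]
      _ = φ a * (φ a * φ (y ^ (n + 1))) := by rw [← mul_assoc, ha.eq]
      _ = φ (a ^ (n + 1) * (a * y) ^ (n + 1)) := by rw [mul_pow a y, map_mul, map_mul, hpow]
      _ = φ a := by rw [hstable, hpow]

theorem exists_isIdempotentElem_map_eq_of_isIntegral {k S T : Type*} [CommRing k]
    [IsArtinianRing k] [Ring S] [Algebra k S] [Semiring T] (φ : S →+* T) {a : S}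
    (hint : IsIntegral k a) (ha : IsIdempotentElem (φ a)) :
    ∃ e : S, IsIdempotentElem e ∧ φ e = φ a := by
  let C := Algebra.adjoin k {a}
  have : IsMulCommutative C := Algebra.isMulCommutative_adjoin k (by simp)
  have : Module.Finite k C := Module.Finite.iff_fg.mpr hint.fg_adjoin_singleton
  have : IsArtinianRing C := IsArtinianRing.of_finite k C
  obtain ⟨e, he, hφe⟩ := exists_isIdempotentElem_map_eq_of_isArtinianRing
    (φ.comp C.val.toRingHom) (a := ⟨a, Algebra.self_mem_adjoin_singleton k a⟩) ha
  exact ⟨e, he.map C.val, hφe⟩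

end IdempotentLifting

section HomogeneousComponent

variable {Γ Δ M N σ τ : Type*} [DecidableEq Γ] [DecidableEq Δ]
  [AddCommMonoid M] [SetLike σ M] [AddSubmonoidClass σ M] (ℳ : Γ → σ) [Decomposition ℳ]
  [AddCommMonoid N] [SetLike τ N] [AddSubmonoidClass τ N]

/-- The projection of a graded additive monoid onto its part of degree `d`, as an endomorphism. -/
def homogeneousComponent (d : Γ) : M →+ M :=
  (AddSubmonoidClass.subtype (ℳ d)).comp
    ((DFinsupp.evalAddMonoidHom d).comp (decomposeAddEquiv ℳ).toAddMonoidHom)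

theorem homogeneousComponent_mem (d : Γ) (m : M) : homogeneousComponent ℳ d m ∈ ℳ d :=
  (decompose ℳ m d).2

variable {ℳ}

theorem homogeneousComponent_of_mem {d : Γ} {m : M} (hm : m ∈ ℳ d) :
    homogeneousComponent ℳ d m = m :=
  decompose_of_mem_same ℳ hm

theorem homogeneousComponent_of_mem_ne {d e : Γ} {m : M} (hm : m ∈ ℳ e) (hed : e ≠ d) :
    homogeneousComponent ℳ d m = 0 :=
  decompose_of_mem_ne ℳ hm hed

theorem homogeneousComponent_map_of_injective {𝒩 : Δ → τ} [Decomposition 𝒩] {s : Γ → Δ}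
    (hs : Function.Injective s) (f : M →+ N) (hf : ∀ d, Set.MapsTo f (ℳ d) (𝒩 (s d)))
    (d : Γ) (m : M) :
    homogeneousComponent 𝒩 (s d) (f m) = f (homogeneousComponent ℳ d m) := by
  induction m using Decomposition.inductionOn ℳ with
  | zero => simp only [map_zero]
  | @homogeneous e m =>
    obtain rfl | hed := eq_or_ne e d
    · rw [homogeneousComponent_of_mem (hf _ m.2), homogeneousComponent_of_mem m.2]
    · rw [homogeneousComponent_of_mem_ne (hf _ m.2) (hs.ne hed),
        homogeneousComponent_of_mem_ne m.2 hed, map_zero]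
  | add x y hx hy => simp only [map_add, hx, hy]

theorem homogeneousComponent_map {𝒩 : Γ → τ} [Decomposition 𝒩] (f : M →+ N)
    (hf : ∀ d, Set.MapsTo f (ℳ d) (𝒩 d)) (d : Γ) (m : M) :
    homogeneousComponent 𝒩 d (f m) = f (homogeneousComponent ℳ d m) :=
  homogeneousComponent_map_of_injective Function.injective_id f hf d m

theorem exists_mem_map_eq_of_surjective {𝒩 : Γ → τ} [Decomposition 𝒩] (f : M →+ N)
    (hf : ∀ d, Set.MapsTo f (ℳ d) (𝒩 d)) (hsurj : Function.Surjective f)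
    {d : Γ} {n : N} (hn : n ∈ 𝒩 d) : ∃ m ∈ ℳ d, f m = n := by
  obtain ⟨m, rfl⟩ := hsurj n
  exact ⟨homogeneousComponent ℳ d m, homogeneousComponent_mem ℳ d m,
    by rw [← homogeneousComponent_map f hf, homogeneousComponent_of_mem hn]⟩

variable (ℳ) in
/-- The degree-preserving part of an additive map `f` between graded additive monoids: on elements
of degree `d` it is `f` followed by the projection onto degree `d`. -/
def degreeZeroPart (𝒩 : Γ → τ) [Decomposition 𝒩] (f : M →+ N) : M →+ N :=
  (toAddMonoid fun d => ((homogeneousComponent 𝒩 d).comp f).comp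
    (AddSubmonoidClass.subtype (ℳ d))).comp (decomposeAddEquiv ℳ).toAddMonoidHom

theorem degreeZeroPart_of_mem (𝒩 : Γ → τ) [Decomposition 𝒩] (f : M →+ N) {d : Γ} {m : M}
    (hm : m ∈ ℳ d) :
    degreeZeroPart ℳ 𝒩 f m = homogeneousComponent 𝒩 d (f m) := by
  simp [degreeZeroPart, decompose_of_mem ℳ hm]

end HomogeneousComponent

section IsInternal

variable {Γ M N : Type*} [DecidableEq Γ] [AddCommGroup M] [AddCommGroup N]

theorem isInternal_of_projections (ℳ : Γ → AddSubgroup M) (c : Γ → M →+ M)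
    (hsame : ∀ d, ∀ m ∈ ℳ d, c d m = m) (hne : ∀ d e, e ≠ d → ∀ m ∈ ℳ e, c d m = 0)
    (hsup : ⨆ d, ℳ d = ⊤) : IsInternal ℳ := by
  have hc (x : ⨁ d, ℳ d) (d : Γ) : c d (DirectSum.coeAddMonoidHom ℳ x) = x d := by
    induction x using DirectSum.induction_on with
    | zero => simp
    | of e y =>
      rw [coeAddMonoidHom_of]
      obtain rfl | hed := eq_or_ne e d
      · rw [hsame _ _ y.2, of_eq_same]
      · rw [hne _ _ hed _ y.2, of_eq_of_ne _ _ _ hed.symm, ZeroMemClass.coe_zero]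
    | add x y hx hy => simp [hx, hy]
  refine ⟨fun x y hxy => ?_, AddMonoidHom.range_eq_top.mp (top_le_iff.mp ?_)⟩
  · ext d
    rw [← hc, ← hc, hxy]
  · rw [← hsup, iSup_le_iff]
    exact fun d m hm => ⟨of (fun d => ℳ d) d ⟨m, hm⟩, coeAddMonoidHom_of ℳ d ⟨m, hm⟩⟩

theorem isInternal_comap_of_retract (ℳ : Γ → AddSubgroup M) [Decomposition ℳ]
    (i : N →+ M) (r : M →+ N) (hri : Function.LeftInverse r i)
    (hir : ∀ d, Set.MapsTo (i ∘ r) (ℳ d) (ℳ d)) : IsInternal fun d => (ℳ d).comap i := by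
  refine isInternal_of_projections _ (fun d => r.comp ((homogeneousComponent ℳ d).comp i))
    (fun d n hn => ?_) (fun d e hed n hn => ?_) (eq_top_iff.mpr fun n _ => ?_)
  · exact (congrArg r (homogeneousComponent_of_mem hn)).trans (hri n)
  · exact (congrArg r (homogeneousComponent_of_mem_ne hn hed)).trans (map_zero r)
  · rw [← hri n]
    generalize i n = m
    induction m using Decomposition.inductionOn ℳ with
    | zero => rw [map_zero]; exact zero_mem _
    | @homogeneous d m => exact AddSubgroup.mem_iSup_of_mem d (hir d m.2)
    | add x y hx hy => rw [map_add]; exact add_mem hx hy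

end IsInternal

section GradedModule

variable {Γ R M N ρ σ τ : Type*} [DecidableEq Γ] [Ring R]
  [AddCommGroup M] [Module R M] [SetLike σ M] [AddSubmonoidClass σ M]
  (ℳ : Γ → σ) [Decomposition ℳ]

variable (R) in
theorem exists_finset_homogeneous_span_eq_top [Module.Finite R M] :
    ∃ s : Finset M, (∀ m ∈ s, ∃ d, m ∈ ℳ d) ∧ Submodule.span R (s : Set M) = ⊤ := by
  have hspan : Submodule.span R {m : M | ∃ d, m ∈ ℳ d} = ⊤ := by
    refine eq_top_iff.mpr fun m _ => ?_
    induction m using Decomposition.inductionOn ℳ with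
    | zero => exact zero_mem _
    | @homogeneous d m => exact Submodule.subset_span ⟨d, m.2⟩
    | add x y hx hy => exact add_mem (hx trivial) (hy trivial)
  obtain ⟨s, hs, hspan_s⟩ := (Submodule.fg_span_iff_fg_span_finset_subset _).mp
    (hspan.symm ▸ Module.Finite.fg_top : (Submodule.span R {m : M | ∃ d, m ∈ ℳ d}).FG)
  exact ⟨s, fun m hm => hs hm, hspan_s.symm.trans hspan⟩

variable [AddGroup Γ] [SetLike ρ R]

theorem homogeneousComponent_smul {ℛ : Γ → ρ} [SetLike.GradedSMul ℛ ℳ] {d : Γ} {a : R}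
    (ha : a ∈ ℛ d) (e : Γ) (m : M) :
    homogeneousComponent ℳ (d + e) (a • m) = a • homogeneousComponent ℳ e m :=
  homogeneousComponent_map_of_injective (add_right_injective d)
    (DistribSMul.toAddMonoidHom M a) (fun _ _ hm => SetLike.GradedSMul.smul_mem ha hm) e m

variable [AddSubmonoidClass ρ R] [AddCommGroup N] [Module R N]
  [SetLike τ N] [AddSubmonoidClass τ N] (𝒩 : Γ → τ) [Decomposition 𝒩]

theorem degreeZeroPart_smul (ℛ : Γ → ρ) [Decomposition ℛ] [SetLike.GradedSMul ℛ ℳ]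
    [SetLike.GradedSMul ℛ 𝒩] (f : M →ₗ[R] N) (a : R) (m : M) :
    degreeZeroPart ℳ 𝒩 f.toAddMonoidHom (a • m) =
      a • degreeZeroPart ℳ 𝒩 f.toAddMonoidHom m := by
  induction a using Decomposition.inductionOn ℛ with
  | zero => simp only [zero_smul, map_zero]
  | add a b ha hb => simp only [add_smul, map_add, ha, hb]
  | @homogeneous d a =>
    induction m using Decomposition.inductionOn ℳ with
    | zero => simp only [smul_zero, map_zero]
    | add m n hm hn => simp only [smul_add, map_add, hm, hn]
    | @homogeneous e m =>
      have ham : (a : R) • (m : M) ∈ ℳ (d + e) := SetLike.GradedSMul.smul_mem a.2 m.2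
      rw [degreeZeroPart_of_mem 𝒩 _ ham, degreeZeroPart_of_mem 𝒩 _ m.2,
        ← homogeneousComponent_smul 𝒩 a.2]
      exact congrArg _ (f.map_smul _ _)

theorem exists_graded_section (ℛ : Γ → ρ) [Decomposition ℛ] [SetLike.GradedSMul ℛ ℳ]
    [SetLike.GradedSMul ℛ 𝒩] [Module.Projective R N] (π : M →ₗ[R] N)
    (hπ : ∀ d, Set.MapsTo π (ℳ d) (𝒩 d)) (hsurj : Function.Surjective π) :
    ∃ s : N →ₗ[R] M, (∀ d, Set.MapsTo s (𝒩 d) (ℳ d)) ∧ Function.LeftInverse π s := by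
  obtain ⟨s, hs⟩ := Module.projective_lifting_property π LinearMap.id hsurj
  let s₀ : N →ₗ[R] M :=
    { degreeZeroPart 𝒩 ℳ s.toAddMonoidHom with map_smul' := degreeZeroPart_smul 𝒩 ℳ ℛ s }
  have hs₀ {d : Γ} {n : N} (hn : n ∈ 𝒩 d) : s₀ n = homogeneousComponent ℳ d (s n) :=
    degreeZeroPart_of_mem ℳ s.toAddMonoidHom hn
  refine ⟨s₀, fun d n hn => ?_, fun n => ?_⟩
  · rw [hs₀ hn]
    exact homogeneousComponent_mem ℳ d _
  · induction n using Decomposition.inductionOn 𝒩 with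
    | zero => simp only [map_zero]
    | add m n hm hn => simp only [map_add, hm, hn]
    | @homogeneous d n =>
      calc π (s₀ n) = π (homogeneousComponent ℳ d (s n)) := by rw [hs₀ n.2]
        _ = homogeneousComponent 𝒩 d (π (s n)) :=
          (homogeneousComponent_map π.toAddMonoidHom hπ d (s n)).symm
        _ = homogeneousComponent 𝒩 d n := congrArg _ (LinearMap.congr_fun hs n)
        _ = n := homogeneousComponent_of_mem n.2

end GradedModule

section ShiftedFree

variable {Γ R ρ ι : Type*} [AddGroup Γ] [Ring R] [SetLike ρ R] [AddSubgroupClass ρ R]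
  (ℛ : Γ → ρ) (deg : ι → Γ)

/-- The degree `d` part of the free graded module with one basis vector of degree `deg i` for each
`i : ι`: the `i`-th coordinate has degree `d - deg i`. -/
def shiftedFree (d : Γ) : AddSubgroup (ι → R) where
  carrier := {x | ∀ i, x i ∈ ℛ (d - deg i)}
  zero_mem' _ := zero_mem _
  add_mem' hx hy i := add_mem (hx i) (hy i)
  neg_mem' hx i := neg_mem (hx i)

theorem single_mem_shiftedFree [DecidableEq ι] (i : ι) {d : Γ} {a : R} (ha : a ∈ ℛ d) :
    Pi.single i a ∈ shiftedFree ℛ deg (d + deg i) := by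
  intro j
  obtain rfl | hji := eq_or_ne j i
  · rwa [Pi.single_eq_same, add_sub_cancel_right]
  · rw [Pi.single_eq_of_ne hji]
    exact zero_mem _

instance shiftedFree.gradedSMul [SetLike.GradedMul ℛ] :
    SetLike.GradedSMul ℛ (shiftedFree ℛ deg) where
  smul_mem {_ _ _ _} ha hx i := by
    rw [vadd_eq_add, add_sub_assoc]
    exact SetLike.mul_mem_graded ha (hx i)

theorem isInternal_shiftedFree [Finite ι] [DecidableEq Γ] [Decomposition ℛ] :
    IsInternal (shiftedFree ℛ deg) := by
  classical
  have := Fintype.ofFinite ι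
  refine isInternal_of_projections _
    (fun d => AddMonoidHom.mk' (fun x i => homogeneousComponent ℛ (d - deg i) (x i))
      fun x y => funext fun i => map_add _ (x i) (y i))
    (fun d x hx => funext fun i => homogeneousComponent_of_mem (hx i))
    (fun d e hed x hx => funext fun i =>
      homogeneousComponent_of_mem_ne (hx i) (sub_left_injective.ne hed))
    (eq_top_iff.mpr fun x _ => ?_)
  have hsingle (i : ι) (a : R) : Pi.single i a ∈ ⨆ d, shiftedFree ℛ deg d := by
    induction a using Decomposition.inductionOn ℛ with
    | zero => rw [Pi.single_zero]; exact zero_mem _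
    | @homogeneous d a =>
      exact AddSubgroup.mem_iSup_of_mem _ (single_mem_shiftedFree ℛ deg i a.2)
    | add a b ha hb => rw [Pi.single_add]; exact add_mem ha hb
  rw [← Finset.univ_sum_single x]
  exact sum_mem fun i _ => hsingle i (x i)

instance shiftedFree.decomposition [Finite ι] [DecidableEq Γ] [Decomposition ℛ] :
    Decomposition (shiftedFree ℛ deg) :=
  (isInternal_shiftedFree ℛ deg).chooseDecomposition

theorem exists_shiftedFree_retraction [DecidableEq Γ] [GradedRing ℛ] {M σ : Type*}
    [AddCommGroup M] [Module R M] [SetLike σ M] [AddSubmonoidClass σ M] (ℳ : Γ → σ)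
    [Decomposition ℳ] [SetLike.GradedSMul ℛ ℳ] [Module.Finite R M] [Module.Projective R M] :
    ∃ (s : Finset M) (deg : s → Γ) (π : (s → R) →ₗ[R] M) (j : M →ₗ[R] (s → R)),
      (∀ d, Set.MapsTo π (shiftedFree ℛ deg d) (ℳ d)) ∧
      (∀ d, Set.MapsTo j (ℳ d) (shiftedFree ℛ deg d)) ∧ Function.LeftInverse π j := by
  obtain ⟨s, hhom, hspan⟩ := exists_finset_homogeneous_span_eq_top R ℳ
  choose deg hdeg using fun m : s => hhom m m.2
  let π : (s → R) →ₗ[R] M := Fintype.linearCombination R Subtype.val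
  have hπ (d : Γ) : Set.MapsTo π (shiftedFree ℛ deg d) (ℳ d) := by
    intro x hx
    refine sum_mem fun i _ => ?_
    simpa only [vadd_eq_add, sub_add_cancel] using SetLike.GradedSMul.smul_mem (hx i) (hdeg i)
  have hsurj : Function.Surjective π := by
    rw [← LinearMap.range_eq_top, Fintype.range_linearCombination, Subtype.range_coe]
    exact hspan
  obtain ⟨j, hj, hπj⟩ := exists_graded_section (shiftedFree ℛ deg) ℳ ℛ π hπ hsurj
  exact ⟨s, deg, π, j, hπ, hj, hπj⟩

end ShiftedFree

section GradedMatrices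

variable {Γ k R S ι : Type*} [AddGroup Γ] [CommRing k] [Ring R] [Algebra k R]
  [Ring S] [Algebra k S] [Fintype ι] [DecidableEq ι]

/-- The algebra of matrices acting by right multiplication on `shiftedFree ℛ deg` as
degree-preserving endomorphisms: the entry at `(i, j)` has degree `deg i - deg j`. -/
def gradedMatrices (ℛ : Γ → Submodule k R) [SetLike.GradedMonoid ℛ] (deg : ι → Γ) :
    Subalgebra k (Matrix ι ι R) where
  carrier := {F | ∀ i, F i ∈ shiftedFree ℛ deg (deg i)}
  mul_mem' {F G} hF hG i j := by
    refine sum_mem fun l _ => ?_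
    simpa only [sub_add_sub_cancel] using SetLike.mul_mem_graded (hF i l) (hG l j)
  add_mem' hF hG i := add_mem (hF i) (hG i)
  algebraMap_mem' r i j := by
    rw [Matrix.algebraMap_matrix_apply]
    split_ifs with hij
    · rw [hij, sub_self]
      exact SetLike.algebraMap_mem_graded ℛ r
    · exact zero_mem _

variable (ℛ : Γ → Submodule k R) [SetLike.GradedMonoid ℛ] (deg : ι → Γ)

instance gradedMatrices.finite [∀ d, Module.Finite k (ℛ d)] :
    Module.Finite k (gradedMatrices ℛ deg) :=
  let toGradedMatrices : (∀ i j, ℛ (deg i - deg j)) →ₗ[k] gradedMatrices ℛ deg :=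
    { toFun F := ⟨fun i j => F i j, fun i j => (F i j).2⟩
      map_add' _ _ := rfl
      map_smul' _ _ := rfl }
  .of_surjective toGradedMatrices fun F => ⟨fun i j => ⟨F.1 i j, F.2 i j⟩, rfl⟩

variable {ℛ deg}

theorem vecMul_mem_shiftedFree {F : Matrix ι ι R} (hF : F ∈ gradedMatrices ℛ deg) {d : Γ}
    {x : ι → R} (hx : x ∈ shiftedFree ℛ deg d) : x ᵥ* F ∈ shiftedFree ℛ deg d := by
  intro i
  refine sum_mem fun j _ => ?_
  simpa only [sub_add_sub_cancel] using SetLike.mul_mem_graded (hx j) (hF j i)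

theorem toMatrixRight'_mem_gradedMatrices {e : (ι → R) →ₗ[R] (ι → R)}
    (he : ∀ d, Set.MapsTo e (shiftedFree ℛ deg d) (shiftedFree ℛ deg d)) :
    LinearMap.toMatrixRight' e ∈ gradedMatrices ℛ deg := by
  intro i
  have hbasis := single_mem_shiftedFree ℛ deg i (SetLike.one_mem_graded ℛ)
  rw [zero_add] at hbasis
  exact he _ hbasis

theorem exists_isIdempotentElem_gradedMatrices_map_eq [DecidableEq Γ] [IsArtinianRing k]
    [Decomposition ℛ] [∀ d, Module.Finite k (ℛ d)] {𝒮 : Γ → Submodule k S} [GradedRing 𝒮]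
    (α : R →ₐ[k] S) (hα : ∀ d, Set.MapsTo α (ℛ d) (𝒮 d)) (hsurj : Function.Surjective α)
    {E : Matrix ι ι S} (hE : E ∈ gradedMatrices 𝒮 deg) (hidem : IsIdempotentElem E) :
    ∃ F ∈ gradedMatrices ℛ deg, IsIdempotentElem F ∧ F.map α = E := by
  choose G hG hGE using fun i j =>
    exists_mem_map_eq_of_surjective (α : R →+ S) hα hsurj (hE i j)
  let φ : gradedMatrices ℛ deg →ₐ[k] Matrix ι ι S :=
    α.mapMatrix.comp (gradedMatrices ℛ deg).val
  let G' : gradedMatrices ℛ deg := ⟨Matrix.of G, hG⟩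
  have hφG : φ G' = E := Matrix.ext hGE
  obtain ⟨F, hF, hφF⟩ := exists_isIdempotentElem_map_eq_of_isIntegral φ.toRingHom
    (IsIntegral.of_finite k G') (hφG.symm ▸ hidem : IsIdempotentElem (φ G'))
  exact ⟨F, F.2, hF.map (gradedMatrices ℛ deg).val, hφF.trans hφG⟩

end GradedMatrices

section Reduction

variable {R S Q ι : Type*} [Ring R] [Ring S] [AddCommGroup Q] [Module S Q] [Fintype ι]
  (α : R →+* S) (π : (ι → S) →ₗ[S] Q) (F : Matrix ι ι R)

/-- For a matrix `F` over `R`, the map from the row space of `F` to a quotient `π : Sⁿ → Q` given by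
applying `α : R → S` to each coordinate. -/
def rowSpaceReduction : LinearMap.range F.vecMulLinear →ₛₗ[α] Q where
  toFun p := π (α ∘ p.1)
  map_add' p q := by
    rw [← map_add]
    exact congrArg π (funext fun i => map_add α (p.1 i) (q.1 i))
  map_smul' a p := by
    rw [← map_smul]
    exact congrArg π (funext fun i => map_mul α a (p.1 i))

variable {α π F}

theorem rowSpaceReduction_vecMul {j : Q →ₗ[S] (ι → S)} (hπj : Function.LeftInverse π j)
    (hF : ∀ x, α ∘ (x ᵥ* F) = j (π (α ∘ x))) (x : ι → R) :
    rowSpaceReduction α π F ⟨x ᵥ* F, x, rfl⟩ = π (α ∘ x) := by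
  change π (α ∘ (x ᵥ* F)) = _
  rw [hF, hπj]

theorem rowSpaceReduction_surjective {j : Q →ₗ[S] (ι → S)} (hπj : Function.LeftInverse π j)
    (hF : ∀ x, α ∘ (x ᵥ* F) = j (π (α ∘ x))) (hsurj : Function.Surjective α) :
    Function.Surjective (rowSpaceReduction α π F) := by
  intro m
  choose x hx using fun i => hsurj (j m i)
  exact ⟨⟨x ᵥ* F, x, rfl⟩, by
    rw [rowSpaceReduction_vecMul hπj hF, show α ∘ x = j m from funext hx, hπj]⟩

theorem vecMul_eq_self_of_mem_range (hidem : IsIdempotentElem F) {p : ι → R}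
    (hp : p ∈ LinearMap.range F.vecMulLinear) : p ᵥ* F = p := by
  obtain ⟨x, rfl⟩ := hp
  rw [Matrix.vecMulLinear_apply, Matrix.vecMul_vecMul, hidem.eq]

theorem ker_rowSpaceReduction {j : Q →ₗ[S] (ι → S)}
    (hF : ∀ x, α ∘ (x ᵥ* F) = j (π (α ∘ x))) (hidem : IsIdempotentElem F) :
    LinearMap.ker (rowSpaceReduction α π F) =
      Submodule.span R {m | ∃ (c : R) (p : LinearMap.range F.vecMulLinear),
        α c = 0 ∧ m = c • p} := by
  classical
  apply le_antisymm
  · intro p hp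
    have hpF := vecMul_eq_self_of_mem_range hidem p.2
    have hαp : α ∘ p.1 = 0 := by
      rw [← hpF, hF]
      exact (congrArg j hp).trans (map_zero j)
    have hp_sum : p = ∑ i, p.1 i • ⟨F i, Pi.single i 1, Matrix.single_one_vecMul i F⟩ := by
      apply Subtype.ext
      rw [AddSubmonoidClass.coe_finsetSum]
      exact hpF.symm.trans (Matrix.vecMul_eq_sum _ _)
    rw [hp_sum]
    exact sum_mem fun i _ => Submodule.subset_span ⟨_, _, congrFun hαp i, rfl⟩
  · rw [Submodule.span_le]
    rintro _ ⟨c, p, hc, rfl⟩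
    rw [SetLike.mem_coe, LinearMap.mem_ker, map_smulₛₗ, hc, zero_smul]

end Reduction

namespace GrFGProj

variable {𝕜 A : Type} [Field 𝕜] [Ring A] [Algebra 𝕜 A] {𝒜 : ℤ → Submodule 𝕜 A}

instance gradedSMul (P : GrFGProj 𝕜 A 𝒜) : SetLike.GradedSMul 𝒜 P.grading where
  smul_mem {_ _ _ _} ha hm := P.smul_mem _ _ _ _ ha hm

/-- The graded projective module cut out of a free graded module by a degree-preserving idempotent,
realised as the row space of a matrix. -/
def ofIdempotent [GradedRing 𝒜] {ι : Type} [Fintype ι] [DecidableEq ι] {deg : ι → ℤ}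
    {F : Matrix ι ι A} (hF : F ∈ gradedMatrices 𝒜 deg) (hidem : IsIdempotentElem F) :
    GrFGProj 𝕜 A 𝒜 where
  M := LinearMap.range F.vecMulLinear
  grading d := (shiftedFree 𝒜 deg d).comap
    (LinearMap.range F.vecMulLinear).subtype.toAddMonoidHom
  internal := isInternal_comap_of_retract (shiftedFree 𝒜 deg) _
    F.vecMulLinear.rangeRestrict.toAddMonoidHom
    (fun p => Subtype.ext (vecMul_eq_self_of_mem_range hidem p.2))
    (fun _ _ hx => vecMul_mem_shiftedFree hF hx)
  smul_mem _ _ _ _ ha hm := SetLike.GradedSMul.smul_mem (B := shiftedFree 𝒜 deg) ha hm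
  fin := inferInstance
  proj := .of_split (LinearMap.range F.vecMulLinear).subtype F.vecMulLinear.rangeRestrict
    (LinearMap.ext fun p => Subtype.ext (vecMul_eq_self_of_mem_range hidem p.2))

/-- `Q` is the graded base change `B ⊗_A P` along `α : A → B`, expressed for surjective `α` as
`P / (ker α) P` with the quotient grading. -/
def IsBaseChange {B : Type} [Ring B] [Algebra 𝕜 B] {ℬ : ℤ → Submodule 𝕜 B} (α : A →ₐ[𝕜] B)
    (P : GrFGProj 𝕜 A 𝒜) (Q : GrFGProj 𝕜 B ℬ) : Prop :=
  ∃ g : P.M →ₛₗ[α.toRingHom] Q.M, Function.Surjective g ∧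
    LinearMap.ker g = Submodule.span A {m : P.M | ∃ (c : A) (p : P.M), α c = 0 ∧ m = c • p} ∧
    ∀ d : ℤ, (P.grading d).map g.toAddMonoidHom = Q.grading d

variable {B : Type} [Ring B] [Algebra 𝕜 B] {ℬ : ℤ → Submodule 𝕜 B} [GradedRing 𝒜] [GradedRing ℬ]
  {α : A →ₐ[𝕜] B}

theorem isBaseChange_ofIdempotent (hα : ∀ d, Set.MapsTo α (𝒜 d) (ℬ d))
    (hsurj : Function.Surjective α) (Q : GrFGProj 𝕜 B ℬ)
    {ι : Type} [Fintype ι] [DecidableEq ι] {deg : ι → ℤ}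
    {π : (ι → B) →ₗ[B] Q.M} (hπ : ∀ d, Set.MapsTo π (shiftedFree ℬ deg d) (Q.grading d))
    {j : Q.M →ₗ[B] (ι → B)} (hj : ∀ d, Set.MapsTo j (Q.grading d) (shiftedFree ℬ deg d))
    (hπj : Function.LeftInverse π j)
    {F : Matrix ι ι A} (hF : F ∈ gradedMatrices 𝒜 deg) (hidem : IsIdempotentElem F)
    (hFj : ∀ x, α ∘ (x ᵥ* F) = j (π (α ∘ x))) :
    IsBaseChange α (ofIdempotent hF hidem) Q := by
  refine ⟨rowSpaceReduction α.toRingHom π F, rowSpaceReduction_surjective hπj hFj hsurj,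
    ker_rowSpaceReduction hFj hidem, fun d => le_antisymm ?_ fun m hm => ?_⟩
  · rintro _ ⟨p, hp, rfl⟩
    exact hπ d fun i => hα _ (hp i)
  · choose x hx hxm using fun i =>
      exists_mem_map_eq_of_surjective (α : A →+ B) hα hsurj (hj d hm i)
    refine ⟨⟨x ᵥ* F, x, rfl⟩, vecMul_mem_shiftedFree hF hx, ?_⟩
    calc rowSpaceReduction α.toRingHom π F ⟨x ᵥ* F, x, rfl⟩
        = π (α ∘ x) := rowSpaceReduction_vecMul hπj hFj x
      _ = π (j m) := congrArg π (funext hxm)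
      _ = m := hπj m

theorem exists_isBaseChange [∀ d, FiniteDimensional 𝕜 (𝒜 d)]
    (hα : ∀ d, Set.MapsTo α (𝒜 d) (ℬ d)) (hsurj : Function.Surjective α)
    (Q : GrFGProj 𝕜 B ℬ) : ∃ P : GrFGProj 𝕜 A 𝒜, IsBaseChange α P Q := by
  classical
  have := Q.internal.chooseDecomposition
  have := Q.fin
  have := Q.proj
  obtain ⟨s, deg, π, j, hπ, hj, hπj⟩ := exists_shiftedFree_retraction ℬ Q.grading
  let E : Matrix s s B := LinearMap.toMatrixRight' (j ∘ₗ π)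
  have hE : E ∈ gradedMatrices ℬ deg :=
    toMatrixRight'_mem_gradedMatrices fun d x hx => hj d (hπ d hx)
  have hEidem : IsIdempotentElem E := by
    rw [IsIdempotentElem, ← LinearMap.toMatrixRight'_comp]
    exact congrArg _ (LinearMap.ext fun x => congrArg j (hπj (π x)))
  obtain ⟨F, hF, hFidem, hFE⟩ :=
    exists_isIdempotentElem_gradedMatrices_map_eq α hα hsurj hE hEidem
  have hFj (x : s → A) : α ∘ (x ᵥ* F) = j (π (α ∘ x)) := by
    calc α ∘ (x ᵥ* F) = (α ∘ x) ᵥ* F.map α := funext (RingHom.map_vecMul α.toRingHom F x)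
      _ = Matrix.toLinearMapRight' E (α ∘ x) := by rw [hFE]; rfl
      _ = j (π (α ∘ x)) := by rw [LinearEquiv.symm_apply_apply]; rfl
  exact ⟨_, isBaseChange_ofIdempotent hα hsurj Q hπ hj hπj hF hFidem hFj⟩

end GrFGProj

theorem closure_range_K0grcls {𝕜 A : Type} [Field 𝕜] [Ring A] [Algebra 𝕜 A]
    (𝒜 : ℤ → Submodule 𝕜 A) :
    AddSubgroup.closure (Set.range (K0grcls 𝕜 A 𝒜)) = ⊤ := by
  refine eq_top_iff.mpr fun z _ => ?_
  obtain ⟨y, rfl⟩ := QuotientAddGroup.mk_surjective z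
  induction y using FreeAbelianGroup.induction_on with
  | zero => exact zero_mem _
  | of x =>
    obtain ⟨P, rfl⟩ := Quot.exists_rep x
    exact AddSubgroup.subset_closure ⟨P, rfl⟩
  | neg x hx => exact neg_mem (hx trivial)
  | add x y hx hy => exact add_mem (hx trivial) (hy trivial)

theorem stmt18_general {𝕜 A B : Type} [Field 𝕜] [Ring A] [Algebra 𝕜 A] [Ring B] [Algebra 𝕜 B]
    {𝒜 : ℤ → Submodule 𝕜 A} {ℬ : ℤ → Submodule 𝕜 B} [GradedRing 𝒜] [GradedRing ℬ]
    [∀ d, FiniteDimensional 𝕜 (𝒜 d)]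
    (α : A →ₐ[𝕜] B) (hsurj : Function.Surjective α)
    (hgraded : ∀ d : ℤ, (𝒜 d).map α.toLinearMap ≤ ℬ d)
    (f : K0gr 𝕜 A 𝒜 →+ K0gr 𝕜 B ℬ)
    (hf : ∀ (P : GrFGProj 𝕜 A 𝒜) (Q : GrFGProj 𝕜 B ℬ), GrFGProj.IsBaseChange α P Q →
      f (K0grcls 𝕜 A 𝒜 P) = K0grcls 𝕜 B ℬ Q) :
    Function.Surjective f := by
  rw [← AddMonoidHom.range_eq_top, ← top_le_iff, ← closure_range_K0grcls, AddSubgroup.closure_le]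
  rintro _ ⟨Q, rfl⟩
  obtain ⟨P, hPQ⟩ := GrFGProj.exists_isBaseChange
    (fun d => Submodule.map_le_iff_le_comap.mp (hgraded d)) hsurj Q
  exact ⟨K0grcls 𝕜 A 𝒜 P, hf P Q hPQ⟩

/-- Bundles the internal description of a grading into Mathlib's `GradedRing` class. -/
abbrev gradedRingOfIsInternal {Γ k R : Type*} [DecidableEq Γ] [AddMonoid Γ] [CommSemiring k]
    [Semiring R] [Algebra k R] {ℛ : Γ → Submodule k R} (hint : IsInternal ℛ)
    (hone : (1 : R) ∈ ℛ 0)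
    (hmul : ∀ (d e : Γ) (x y : R), x ∈ ℛ d → y ∈ ℛ e → x * y ∈ ℛ (d + e)) : GradedRing ℛ :=
  { hint.chooseDecomposition with
    one_mem := hone
    mul_mem := fun {d e x y} hx hy => hmul d e x y hx hy }

-- STATEMENT 18
theorem stmt18 (B : Type) [Ring B] [Algebra 𝕜 B] (ℬ : ℤ → Submodule 𝕜 B)
    [FiniteDimensional 𝕜 A] [FiniteDimensional 𝕜 B]
    (hAint : DirectSum.IsInternal 𝒜) (hAone : (1 : A) ∈ 𝒜 0)
    (hAmul : ∀ (d e : ℤ) (x y : A), x ∈ 𝒜 d → y ∈ 𝒜 e → x * y ∈ 𝒜 (d + e))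
    (hBint : DirectSum.IsInternal ℬ) (hBone : (1 : B) ∈ ℬ 0)
    (hBmul : ∀ (d e : ℤ) (x y : B), x ∈ ℬ d → y ∈ ℬ e → x * y ∈ ℬ (d + e))
    (α : A →ₐ[𝕜] B) (hsurj : Function.Surjective α)
    (hgraded : ∀ d : ℤ, (𝒜 d).map α.toLinearMap ≤ ℬ d)
    -- `f` is the homomorphism `K₀(α)` induced by `α`, i.e. it sends the class of a
    -- finitely generated graded projective `A`-module `P` to the class of the base
    -- change `B ⊗_A P`, characterized as any graded `B`-module `Q` admitting an
    -- `α`-semilinear surjection `P → Q` with kernel `(ker α)·P` mapping the grading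
    -- of `P` onto that of `Q`.
    (f : K0gr 𝕜 A 𝒜 →+ K0gr 𝕜 B ℬ)
    (hf : ∀ (P : GrFGProj 𝕜 A 𝒜) (Q : GrFGProj 𝕜 B ℬ),
      (∃ g : P.M →ₛₗ[α.toRingHom] Q.M, Function.Surjective g ∧
        LinearMap.ker g =
          Submodule.span A {m : P.M | ∃ (c : A) (p : P.M), α c = 0 ∧ m = c • p} ∧
        ∀ d : ℤ, (P.grading d).map g.toAddMonoidHom = Q.grading d) →
      f (K0grcls 𝕜 A 𝒜 P) = K0grcls 𝕜 B ℬ Q) :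
    Function.Surjective f := by
  let _ := gradedRingOfIsInternal hAint hAone hAmul
  let _ := gradedRingOfIsInternal hBint hBone hBmul
  exact stmt18_general α hsurj hgraded f hf

end
end
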